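/- arXiv:1608.08155 — 2 statements merged into one kernel-verified Lean document; each statement's English description precedes it below -/
import Mathlib

section
/- Let (R, m) be a Noetherian local ring, M a finitely generated R-module of dimension d, and x_1, ..., x_r a part of a system of parameters of M (i.e. a sequence that can be extended to a full system of parameters x_1, ..., x_d of M). Then H^r_{(x_1, ..., x_r)}(M) ≠ 0. -/
/-!
All local cohomology is computed as `H^i_J(M) = colim_n Ext^i(R ⧸ J ^ n, M)`, with `Ext` taken in the
derived category, because there the long exact sequences are available (`LC.H`, `LC.H.exact`). If
Mathlib's `localCohomology` module, built from left derived functors of `Hom(-, M)` into an opposite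
category, vanishes, then so does `H^i_J(M)` (`LC.H.subsingleton_of_localCohomology`).

Reduction to a full system of parameters. Let `J` be an ideal of a Noetherian ring. If
`H^i_J(M)` and `H^{i+1}_J(M)` vanish, then so does `H^{i+1}_{J + (x)}(M)`. Classically this follows from
the sequence `H^i_J(M)_x → H^{i+1}_{J+(x)}(M) → H^{i+1}_J(M)`; here it is obtained by dimension
shifting from a direct argument in degree one (`LC.H.subsingleton_sup`, `LC.H.subsingleton_one_sup`).
It follows that `H^i` vanishes above the number of generators of the ideal, that torsion modules have
no higher local cohomology, and that `H^r_{(x₁, …, x_r)}(M) = 0` would force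
`H^d_{(x₁, …, x_d)}(M) = 0` (`LC.H.subsingleton_of_le`).

Grothendieck's nonvanishing theorem. The ideal `I = (x₁, …, x_d)` satisfies `𝔪 ^ s ≤ I + Ann M` for
some `s`, and for such ideals inside `𝔪` one has `H^d_I(M) ≠ 0`, where `d = dim M`
(`LC.H.not_subsingleton`). This is an
induction on `d`. Dividing by `Γ_I(M)` one may assume `M` has no `I`-torsion. The module
`H^{d-1}_I(M)` is Artinian, so up to a finitely generated submodule it is divisible by every `y`
outside finitely many nonmaximal primes; by prime avoidance some such `y ∈ 𝔪` is also `M`-regular. If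
`H^d_I(M) = 0`, then `H^{d-1}_I(M ⧸ yM)` is the cokernel of `y` on `H^{d-1}_I(M)`, hence finitely
generated. In positive degree, a finitely generated top local cohomology module is zero, by Nakayama's
lemma and the vanishing of `H^i_I` above the dimension; in degree zero the cokernel vanishes because
`H^0_I(M) = Γ_I(M) = 0`. Either way the induction hypothesis for `M ⧸ yM` is contradicted.
-/

open IsLocalRing

universe u

/-- The dimension of a module `M`: the Krull dimension of `R ⧸ Ann M`. -/
noncomputable def moduleDim (R M : Type*) [CommRing R] [AddCommGroup M] [Module R M] :
    WithBot ℕ∞ :=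
  ringKrullDim (R ⧸ Module.annihilator R M)

/-- A system of parameters of a `d`-dimensional module `M` over a Noetherian local ring:
a sequence of `d` elements of the maximal ideal such that `M/(x₁, …, x_d)M` has finite
length. -/
def IsSystemOfParameters {R : Type*} [CommRing R] [IsLocalRing R] (M : Type*)
    [AddCommGroup M] [Module R M] {d : ℕ} (x : Fin d → R) : Prop :=
  (∀ i, x i ∈ maximalIdeal R) ∧
    IsFiniteLength R (M ⧸ (Ideal.span (Set.range x) • (⊤ : Submodule R M)))

namespace LC

open CategoryTheory Abelian

/-! ### Local cohomology as a direct limit of `Ext` modules -/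

section Construction

variable {R : Type u} [CommRing R] (J : Ideal R)

/-- The cyclic module `R ⧸ J ^ n` as an object of the category of modules. -/
noncomputable abbrev quotPow (n : ℕ) : ModuleCat.{u} R := ModuleCat.of R (R ⧸ J ^ n)

/-- The projection `R ⧸ J ^ n → R ⧸ J ^ m` for `m ≤ n`. -/
noncomputable def quotPowMap {m n : ℕ} (h : m ≤ n) : quotPow J n ⟶ quotPow J m :=
  ModuleCat.ofHom (Submodule.mapQ (J ^ n) (J ^ m) LinearMap.id (Ideal.pow_le_pow_right h))

theorem quotPowMap_refl (n : ℕ) : quotPowMap J (le_refl n) = 𝟙 _ := by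
  ext
  rfl

theorem quotPowMap_comp {l m n : ℕ} (h : l ≤ m) (h' : m ≤ n) :
    quotPowMap J h' ≫ quotPowMap J h = quotPowMap J (h.trans h') := by
  ext
  rfl

variable (i : ℕ) (M : Type u) [AddCommGroup M] [Module R M]

/-- The transition maps of the direct system `n ↦ Ext^i(R ⧸ J ^ n, M)`. -/
noncomputable def extTransition (m n : ℕ) (h : m ≤ n) :
    Ext (quotPow J m) (ModuleCat.of R M) i →ₗ[R] Ext (quotPow J n) (ModuleCat.of R M) i :=
  Ext.precompOfLinear (Ext.mk₀ (quotPowMap J h)) R _ (zero_add i)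

theorem extTransition_apply (m n : ℕ) (h : m ≤ n) (x : Ext (quotPow J m) (ModuleCat.of R M) i) :
    extTransition J i M m n h x = (Ext.mk₀ (quotPowMap J h)).comp x (zero_add i) := rfl

instance : DirectedSystem (fun n => Ext (quotPow J n) (ModuleCat.of R M) i)
    (fun m n h => extTransition J i M m n h) where
  map_self n x := by
    rw [extTransition_apply, quotPowMap_refl, Ext.mk₀_id_comp]
  map_map l m n h h' x := by
    simp only [extTransition_apply]
    rw [← quotPowMap_comp J h h', Ext.mk₀_comp_mk₀_assoc]

/-- The local cohomology module `H^i_J(M)`, computed as the direct limit of the modules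
`Ext^i(R ⧸ J ^ n, M)`, with `Ext` defined through the derived category. -/
def H : Type u :=
  Module.DirectLimit (fun n => Ext (quotPow J n) (ModuleCat.of R M) i) (extTransition J i M)

noncomputable instance : AddCommGroup (H J i M) :=
  inferInstanceAs (AddCommGroup (Module.DirectLimit _ (extTransition J i M)))

noncomputable instance : Module R (H J i M) :=
  inferInstanceAs (Module R (Module.DirectLimit _ (extTransition J i M)))

/-- The canonical map `Ext^i(R ⧸ J ^ n, M) → H^i_J(M)`. -/
noncomputable def H.of (n : ℕ) : Ext (quotPow J n) (ModuleCat.of R M) i →ₗ[R] H J i M :=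
  Module.DirectLimit.of R ℕ _ (extTransition J i M) n

variable {J i M}

theorem H.of_transition {m n : ℕ} (h : m ≤ n) (x : Ext (quotPow J m) (ModuleCat.of R M) i) :
    H.of J i M n ((Ext.mk₀ (quotPowMap J h)).comp x (zero_add i)) = H.of J i M m x :=
  Module.DirectLimit.of_f (hij := h)

theorem H.exists_of (z : H J i M) : ∃ n x, H.of J i M n x = z :=
  Module.DirectLimit.exists_of z

theorem H.of_eq_zero {n : ℕ} {x : Ext (quotPow J n) (ModuleCat.of R M) i}
    (h : H.of J i M n x = 0) :
    ∃ m, ∃ h : n ≤ m, (Ext.mk₀ (quotPowMap J h)).comp x (zero_add i) = 0 := by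
  obtain ⟨m, hm, h⟩ := Module.DirectLimit.of.zero_exact h
  exact ⟨m, hm, h⟩

variable {N P : Type u} [AddCommGroup N] [Module R N] [AddCommGroup P] [Module R P]

/-- Post-composition with a class in `Ext^a(M, N)` on local cohomology. -/
noncomputable def H.postcomp (J : Ideal R) {a i j : ℕ}
    (β : Ext (ModuleCat.of R M) (ModuleCat.of R N) a) (h : i + a = j) :
    H J i M →ₗ[R] H J j N :=
  Module.DirectLimit.map (fun n => Ext.postcompOfLinear β R (quotPow J n) h) (by
    intro m n hmn
    ext x
    simp only [LinearMap.comp_apply, LinearMap.flip_apply, Ext.bilinearCompOfLinear_apply_apply,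
      extTransition_apply]
    rw [Ext.comp_assoc]
    omega)

theorem H.postcomp_of (J : Ideal R) {a i j : ℕ}
    (β : Ext (ModuleCat.of R M) (ModuleCat.of R N) a) (h : i + a = j) (n : ℕ)
    (x : Ext (quotPow J n) (ModuleCat.of R M) i) :
    H.postcomp J β h (H.of J i M n x) = H.of J j N n (x.comp β h) := by
  exact Module.DirectLimit.map_apply_of _ _ _

/-- The map induced on local cohomology by a linear map. -/
noncomputable def H.map (J : Ideal R) (i : ℕ) (f : M →ₗ[R] N) : H J i M →ₗ[R] H J i N :=
  H.postcomp J (Ext.mk₀ (ModuleCat.ofHom f)) (add_zero i)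

theorem H.map_of (J : Ideal R) (i : ℕ) (f : M →ₗ[R] N) (n : ℕ)
    (x : Ext (quotPow J n) (ModuleCat.of R M) i) :
    H.map J i f (H.of J i M n x) =
      H.of J i N n (x.comp (Ext.mk₀ (ModuleCat.ofHom f)) (add_zero i)) :=
  H.postcomp_of ..

theorem H.map_comp (J : Ideal R) (i : ℕ) (f : M →ₗ[R] N) (g : N →ₗ[R] P) (z : H J i M) :
    H.map J i g (H.map J i f z) = H.map J i (g ∘ₗ f) z := by
  obtain ⟨n, x, rfl⟩ := H.exists_of z
  simp only [H.map_of, ModuleCat.ofHom_comp]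
  rw [Ext.comp_assoc _ _ _ _ (zero_add 0) (by omega), Ext.mk₀_comp_mk₀]

theorem H.map_smul_id (J : Ideal R) (i : ℕ) (y : R) (z : H J i M) :
    H.map J i (y • LinearMap.id : M →ₗ[R] M) z = y • z := by
  obtain ⟨n, x, rfl⟩ := H.exists_of z
  rw [H.map_of, ← map_smul, Ext.smul_eq_comp_mk₀]
  rfl

theorem H.zero_map (J : Ideal R) (i : ℕ) (z : H J i M) :
    H.map J i (0 : M →ₗ[R] N) z = 0 := by
  obtain ⟨n, x, rfl⟩ := H.exists_of z
  rw [H.map_of, ModuleCat.ofHom_zero, Ext.mk₀_zero, Ext.comp_zero, map_zero]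

theorem H.id_map (J : Ideal R) (i : ℕ) (z : H J i M) :
    H.map J i (LinearMap.id : M →ₗ[R] M) z = z := by
  simpa using H.map_smul_id J i (1 : R) z

/-- The long exact sequence of local cohomology. -/
theorem H.exact (J : Ideal R) {f : M →ₗ[R] N} {g : N →ₗ[R] P} (hf : Function.Injective f)
    (hfg : Function.Exact f g) (hg : Function.Surjective g) (i : ℕ) :
    Function.Exact (H.map J i f) (H.map J i g) ∧
    ∃ δ : H J i P →ₗ[R] H J (i + 1) M,
      Function.Exact (H.map J i g) δ ∧ Function.Exact δ (H.map J (i + 1) f) := by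
  let S : ShortComplex (ModuleCat.{u} R) :=
    ShortComplex.mk (ModuleCat.ofHom f) (ModuleCat.ofHom g) (by
      ext x; exact hfg.apply_apply_eq_zero x)
  have hS : S.ShortExact := by
    have : Mono S.f := (ModuleCat.mono_iff_injective _).2 hf
    have : Epi S.g := (ModuleCat.epi_iff_surjective _).2 hg
    exact ⟨(ShortComplex.ShortExact.moduleCat_exact_iff_function_exact S).2 hfg⟩
  have hfg0 : g ∘ₗ f = 0 := by ext x; exact hfg.apply_apply_eq_zero x
  refine ⟨fun z => ⟨fun hz => ?_, ?_⟩, H.postcomp J hS.extClass rfl, fun z => ⟨fun hz => ?_, ?_⟩,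
    fun z => ⟨fun hz => ?_, ?_⟩⟩
  · obtain ⟨n, x, rfl⟩ := H.exists_of z
    rw [H.map_of] at hz
    obtain ⟨m, hm, hz⟩ := H.of_eq_zero hz
    rw [← Ext.comp_assoc (h := by omega) (h₁₂ := zero_add i)] at hz
    obtain ⟨w, hw⟩ := Ext.covariant_sequence_exact₂ (quotPow J m) hS _ hz
    refine ⟨H.of J i M m w, ?_⟩
    rw [H.map_of, ← H.of_transition hm x]
    exact congrArg _ hw
  · rintro ⟨w, rfl⟩
    rw [H.map_comp, hfg0, H.zero_map]
  · obtain ⟨n, x, rfl⟩ := H.exists_of z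
    rw [H.postcomp_of] at hz
    obtain ⟨m, hm, hz⟩ := H.of_eq_zero hz
    rw [← Ext.comp_assoc (h := by omega) (h₁₂ := zero_add i)] at hz
    obtain ⟨w, hw⟩ := Ext.covariant_sequence_exact₃ (quotPow J m) hS _ rfl hz
    refine ⟨H.of J i N m w, ?_⟩
    rw [H.map_of, ← H.of_transition hm x]
    exact congrArg _ hw
  · rintro ⟨w, rfl⟩
    obtain ⟨n, x, rfl⟩ := H.exists_of w
    rw [H.map_of, H.postcomp_of, Ext.comp_assoc _ _ _ _ (zero_add 1) (by omega)]
    have := hS.comp_extClass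
    rw [show (Ext.mk₀ (ModuleCat.ofHom g)).comp hS.extClass (zero_add 1) = 0 from this,
      Ext.comp_zero, map_zero]
  · obtain ⟨n, x, rfl⟩ := H.exists_of z
    rw [H.map_of] at hz
    obtain ⟨m, hm, hz⟩ := H.of_eq_zero hz
    rw [← Ext.comp_assoc (h := by omega) (h₁₂ := zero_add (i + 1))] at hz
    obtain ⟨w, hw⟩ := Ext.covariant_sequence_exact₁ (quotPow J m) hS _ hz rfl
    refine ⟨H.of J i P m w, ?_⟩
    rw [H.postcomp_of, ← H.of_transition hm x]
    exact congrArg _ hw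
  · rintro ⟨w, rfl⟩
    obtain ⟨n, x, rfl⟩ := H.exists_of w
    rw [H.postcomp_of, H.map_of, Ext.comp_assoc _ _ _ _ (add_zero 1) (by omega)]
    have := hS.extClass_comp
    rw [show hS.extClass.comp (Ext.mk₀ (ModuleCat.ofHom f)) (add_zero 1) = 0 from this,
      Ext.comp_zero, map_zero]

end Construction

/-! ### Torsion submodules and local cohomology in degree zero -/

section Basic

variable {R : Type u} [CommRing R] {J : Ideal R} {i : ℕ} {M : Type u} [AddCommGroup M]
  [Module R M] {N : Type u} [AddCommGroup N] [Module R N]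

theorem H.subsingleton_of_injective (J : Ideal R) (i : ℕ) (E : Type u) [AddCommGroup E]
    [Module R E] [Module.Injective R E] : Subsingleton (H J (i + 1) E) := by
  have : Injective (ModuleCat.of R E) := Module.injective_object_of_injective_module R E
  refine subsingleton_of_forall_eq 0 fun z => ?_
  obtain ⟨n, x, rfl⟩ := H.exists_of z
  rw [Ext.eq_zero_of_injective x, map_zero]

/-- Every class is killed by a power of `J`, since `Ext^i(R ⧸ J ^ n, M)` is killed by `J ^ n`. -/
theorem H.exists_pow_smul_eq_zero (z : H J i M) : ∃ n, ∀ a ∈ J ^ n, a • z = 0 := by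
  obtain ⟨n, x, rfl⟩ := H.exists_of z
  refine ⟨n, fun a ha => ?_⟩
  have h0 : a • 𝟙 (quotPow J n) = 0 := by
    ext
    change a • Ideal.Quotient.mk (J ^ n) 1 = 0
    rw [← Ideal.Quotient.mk_eq_mk, ← Submodule.Quotient.mk_smul]
    simpa [Ideal.Quotient.eq_zero_iff_mem] using ha
  rw [← map_smul]
  conv_lhs => rw [← Ext.mk₀_id_comp x, ← Ext.smul_comp, ← Ext.mk₀_smul, h0, Ext.mk₀_zero,
    Ext.zero_comp, map_zero]

theorem H.smul_eq_zero_of_mem_annihilator {a : R} (ha : a ∈ Module.annihilator R M)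
    (z : H J i M) : a • z = 0 := by
  have h : (a • LinearMap.id : M →ₗ[R] M) = 0 := by
    ext u
    exact Module.mem_annihilator.1 ha u
  rw [← H.map_smul_id, h, H.zero_map]

/-- For the zero ideal the direct system is eventually `Ext^i(R, M)`, and `R` is projective. -/
theorem H.subsingleton_bot (i : ℕ) (M : Type u) [AddCommGroup M] [Module R M] :
    Subsingleton (H (⊥ : Ideal R) (i + 1) M) := by
  refine subsingleton_of_forall_eq 0 fun z => ?_
  obtain ⟨n, x, rfl⟩ := H.exists_of z
  have hbot : (⊥ : Ideal R) ^ (n + 1) = ⊥ := Ideal.bot_pow (Nat.succ_ne_zero n)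
  have : Module.Projective R (R ⧸ (⊥ : Ideal R) ^ (n + 1)) :=
    Module.Projective.of_equiv (Submodule.quotEquivOfEqBot _ hbot).symm
  have : Projective (quotPow (⊥ : Ideal R) (n + 1)) :=
    (IsProjective.iff_projective _).1 this
  rw [← H.of_transition (Nat.le_succ n) x]
  exact (congrArg _ (Ext.eq_zero_of_projective (P := quotPow (⊥ : Ideal R) (n + 1)) _)).trans
    (map_zero _)

/-- The submodule `Γ_J(M)` of elements killed by a power of `J`. -/
def Γ (J : Ideal R) (M : Type u) [AddCommGroup M] [Module R M] : Submodule R M where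
  carrier := {u | ∃ n, ∀ a ∈ J ^ n, a • u = 0}
  zero_mem' := ⟨0, fun a _ => smul_zero a⟩
  add_mem' := by
    rintro u v ⟨m, hm⟩ ⟨n, hn⟩
    refine ⟨max m n, fun a ha => ?_⟩
    rw [smul_add, hm a (Ideal.pow_le_pow_right (le_max_left m n) ha),
      hn a (Ideal.pow_le_pow_right (le_max_right m n) ha), add_zero]
  smul_mem' := by
    rintro c u ⟨m, hm⟩
    exact ⟨m, fun a ha => by rw [smul_comm, hm a ha, smul_zero]⟩

theorem mem_Γ {u : M} : u ∈ Γ J M ↔ ∃ n, ∀ a ∈ J ^ n, a • u = 0 := Iff.rfl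

/-- Evaluation at `1` of a class in `Ext^0(R ⧸ J ^ n, M)`. -/
noncomputable def evalOne (J : Ideal R) (n : ℕ) (M : Type u) [AddCommGroup M] [Module R M] :
    Ext (quotPow J n) (ModuleCat.of R M) 0 →ₗ[R] M where
  toFun x := (Ext.linearEquiv₀ (R := R) x).hom (Submodule.Quotient.mk 1)
  map_add' x y := by simp
  map_smul' a x := by simp

theorem evalOne_mk₀ (n : ℕ) (f : quotPow J n ⟶ ModuleCat.of R M) :
    evalOne J n M (Ext.mk₀ f) = f.hom (Submodule.Quotient.mk 1) := by
  change (Ext.linearEquiv₀ (R := R) (Ext.mk₀ f)).hom _ = _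
  rw [← Ext.linearEquiv₀_symm_apply (R := R), LinearEquiv.apply_symm_apply]

/-- The evaluation map `H^0_J(M) → M`, an isomorphism onto `Γ_J(M)`. -/
noncomputable def H.ι (J : Ideal R) (M : Type u) [AddCommGroup M] [Module R M] :
    H J 0 M →ₗ[R] M :=
  Module.DirectLimit.lift R ℕ _ (extTransition J 0 M) (fun n => evalOne J n M) (by
    intro m n h x
    obtain ⟨f, rfl⟩ := (Ext.linearEquiv₀ (R := R)).symm.surjective x
    rw [extTransition_apply, Ext.linearEquiv₀_symm_apply, Ext.mk₀_comp_mk₀, evalOne_mk₀,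
      evalOne_mk₀]
    rfl)

theorem H.ι_of (n : ℕ) (f : quotPow J n ⟶ ModuleCat.of R M) :
    H.ι J M (H.of J 0 M n (Ext.mk₀ f)) = f.hom (Submodule.Quotient.mk 1) := by
  rw [← evalOne_mk₀]
  exact Module.DirectLimit.lift_of _ _ _

theorem H.exists_of_zero (z : H J 0 M) :
    ∃ n, ∃ f : quotPow J n ⟶ ModuleCat.of R M, H.of J 0 M n (Ext.mk₀ f) = z := by
  obtain ⟨n, x, rfl⟩ := H.exists_of z
  obtain ⟨f, rfl⟩ := (Ext.linearEquiv₀ (R := R)).symm.surjective x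
  exact ⟨n, f, by rw [Ext.linearEquiv₀_symm_apply]⟩

theorem H.ι_map (f : M →ₗ[R] N) (z : H J 0 M) : H.ι J N (H.map J 0 f z) = f (H.ι J M z) := by
  obtain ⟨n, g, rfl⟩ := H.exists_of_zero z
  rw [H.map_of, Ext.mk₀_comp_mk₀, H.ι_of, H.ι_of]
  rfl

theorem H.ι_injective (J : Ideal R) (M : Type u) [AddCommGroup M] [Module R M] :
    Function.Injective (H.ι J M) := by
  rw [injective_iff_map_eq_zero]
  intro z hz
  obtain ⟨n, g, rfl⟩ := H.exists_of_zero z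
  rw [H.ι_of] at hz
  have : g = 0 := by
    ext
    exact hz
  rw [this, Ext.mk₀_zero, map_zero]

theorem H.range_ι (J : Ideal R) (M : Type u) [AddCommGroup M] [Module R M] :
    LinearMap.range (H.ι J M) = Γ J M := by
  ext u
  constructor
  · rintro ⟨z, rfl⟩
    obtain ⟨n, h⟩ := H.exists_pow_smul_eq_zero z
    exact ⟨n, fun a ha => by rw [← map_smul, h a ha, map_zero]⟩
  · rintro ⟨n, h⟩
    let g : (R ⧸ J ^ n) →ₗ[R] M := Submodule.liftQ (J ^ n) (LinearMap.toSpanSingleton R M u) (by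
      intro a ha
      simpa using h a ha)
    refine ⟨H.of J 0 M n (Ext.mk₀ (ModuleCat.ofHom g)), ?_⟩
    rw [H.ι_of]
    exact (Submodule.liftQ_apply _ _ _).trans (one_smul R u)

end Basic

/-! ### Comparison with `localCohomology` -/

section Link

open Opposite Limits

variable {R : Type u} [CommRing R]

/-- The functor `Hom(-, Y)` with values in the opposite category of modules. -/
noncomputable abbrev homFunctor (Y : ModuleCat.{u} R) : ModuleCat.{u} R ⥤ (ModuleCat.{u} R)ᵒᵖ :=
  ((linearYoneda R (ModuleCat.{u} R)).obj Y).rightOp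

/-- An element of `Hom(X, Y)`, seen as a morphism from `Hom(X, Y)` to `R` in the opposite
category. -/
noncomputable def point {X Y : ModuleCat.{u} R} (f : X ⟶ Y) :
    (homFunctor Y).obj X ⟶ op (ModuleCat.of R R) :=
  Quiver.Hom.op (ModuleCat.ofHom (LinearMap.toSpanSingleton R (X ⟶ Y) f) :
    ModuleCat.of R R ⟶ ModuleCat.of R (X ⟶ Y))

theorem map_point {X X' Y : ModuleCat.{u} R} (g : X' ⟶ X) (f : X ⟶ Y) :
    (homFunctor Y).map g ≫ point f = point (g ≫ f) := by
  apply Quiver.Hom.unop_inj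
  ext
  change g ≫ ((1 : R) • f) = (1 : R) • (g ≫ f)
  simp

theorem point_zero {X Y : ModuleCat.{u} R} : point (0 : X ⟶ Y) = 0 := by
  apply Quiver.Hom.unop_inj
  ext
  change (1 : R) • (0 : X ⟶ Y) = 0
  simp

theorem map_point_eq_zero {X X' Y : ModuleCat.{u} R} {g : X' ⟶ X} {f : X ⟶ Y} (h : g ≫ f = 0) :
    (homFunctor Y).map g ≫ point f = 0 := by
  rw [map_point, h, point_zero]

theorem exists_eq_point {X Y : ModuleCat.{u} R}
    (t : (homFunctor Y).obj X ⟶ op (ModuleCat.of R R)) : ∃ f, t = point f := by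
  refine ⟨(t.unop.hom : R →ₗ[R] (X ⟶ Y)) 1, ?_⟩
  apply Quiver.Hom.unop_inj
  ext
  change _ = (1 : R) • (t.unop.hom : R →ₗ[R] (X ⟶ Y)) 1
  rw [one_smul]

theorem point_injective {X Y : ModuleCat.{u} R} {f g : X ⟶ Y} (h : point f = point g) :
    f = g := by
  have := congrArg (fun t => (t.unop.hom : R →ₗ[R] (X ⟶ Y)) 1) h
  change (1 : R) • f = (1 : R) • g at this
  simpa using this

instance : Injective (op (ModuleCat.of R R)) := by
  have : Projective (ModuleCat.of R R) := (IsProjective.iff_projective _).1 inferInstance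
  infer_instance

variable {X Y : ModuleCat.{u} R} (P : ProjectiveResolution X)

/-- The morphism from the `n`-th left derived functor of `Hom(-, Y)` to `R` in the opposite category
given by a cocycle `P_n → Y`. -/
noncomputable def derivedPoint {n : ℕ} (f : P.complex.X n ⟶ Y)
    (hf : P.complex.d (n + 1) n ≫ f = 0) :
    ((homFunctor Y).leftDerived n).obj X ⟶ op (ModuleCat.of R R) :=
  (P.isoLeftDerivedObj (homFunctor Y) n).hom ≫
    HomologicalComplex.homologyι _ n ≫
      HomologicalComplex.descOpcycles _ (point f) (n + 1) (by simp) (map_point_eq_zero hf)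

/-- Naturality of `derivedPoint`: the transition maps of the direct system defining
`localCohomology` act on cocycles by composition with a lift to projective resolutions. -/
theorem map_derivedPoint {X' : ModuleCat.{u} R} {P' : ProjectiveResolution X'} {n : ℕ}
    (f : P.complex.X n ⟶ Y) (hf : P.complex.d (n + 1) n ≫ f = 0) {g : X' ⟶ X}
    (φ : ProjectiveResolution.Hom P' P g) (hf' : P'.complex.d (n + 1) n ≫ φ.hom.f n ≫ f = 0) :
    ((homFunctor Y).leftDerived n).map g ≫ derivedPoint P f hf =
      derivedPoint P' (φ.hom.f n ≫ f) hf' := by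
  have hφ : φ.hom.f 0 ≫ P.π.f 0 = P'.π.f 0 ≫ g := φ.hom_f_zero_comp_π_f_zero
  rw [derivedPoint, ProjectiveResolution.isoLeftDerivedObj_hom_naturality_assoc g P' P φ.hom hφ,
    derivedPoint]
  congr 1
  refine (HomologicalComplex.homologyι_naturality_assoc
    (((homFunctor Y).mapHomologicalComplex (ComplexShape.down ℕ)).map φ.hom) n _).trans ?_
  congr 1
  rw [← cancel_epi (HomologicalComplex.pOpcycles _ _)]
  rw [HomologicalComplex.p_opcyclesMap_assoc]
  refine (congrArg _ (HomologicalComplex.p_descOpcycles _ _ _ _ _)).trans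
    (Eq.trans ?_ (HomologicalComplex.p_descOpcycles _ _ _ _ _).symm)
  exact map_point _ _

/-- A cocycle whose class in the derived functor vanishes is a coboundary, so its class in the
derived-category `Ext` vanishes too. As `R` is injective in the opposite category, a morphism to `R`
that vanishes on the homology extends along the differential. -/
theorem extMk_eq_zero_of_derivedPoint_eq_zero {n : ℕ} (f : P.complex.X n ⟶ Y)
    (hf : P.complex.d (n + 1) n ≫ f = 0) (h : derivedPoint P f hf = 0) :
    P.extMk f (n + 1) rfl hf = 0 := by
  rw [derivedPoint, ← cancel_epi (P.isoLeftDerivedObj (homFunctor Y) n).inv,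
    Iso.inv_hom_id_assoc, comp_zero] at h
  let K := ((homFunctor Y).mapHomologicalComplex (ComplexShape.down ℕ)).obj P.complex
  cases n with
  | zero =>
    have : IsIso (K.homologyι 0) := K.isIso_homologyι 0 0 (by simp) (by simp [K])
    have h1 : K.descOpcycles (point f) (0 + 1) (by simp)
        (map_point_eq_zero hf) = 0 := by
      rw [← cancel_epi (K.homologyι 0), comp_zero]
      exact h
    have h2 : point f = 0 := by
      rw [← K.p_descOpcycles (point f) (0 + 1) (by simp)
        (map_point_eq_zero hf), h1]
      exact comp_zero
    have h3 : f = 0 := point_injective (h2.trans point_zero.symm)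
    subst h3
    exact P.extMk_zero _ _
  | succ p =>
    rw [P.extMk_eq_zero_iff f _ rfl hf p rfl]
    let S := ShortComplex.mk (K.homologyι (p + 1)) (K.fromOpcycles (p + 1) p) (by simp)
    have hS : S.Exact :=
      ShortComplex.exact_of_f_is_kernel _ (K.homologyIsKernel (p + 1) p (by simp))
    let t := hS.descToInjective (K.descOpcycles (point f) (p + 1 + 1) (by simp)
        (map_point_eq_zero hf)) h
    have ht : K.fromOpcycles (p + 1) p ≫ t = _ := hS.comp_descToInjective _ h
    obtain ⟨g, hg⟩ := exists_eq_point t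
    refine ⟨g, point_injective ?_⟩
    rw [← map_point, ← hg, ← K.p_descOpcycles (point f) (p + 1 + 1) (by simp)
        (map_point_eq_zero hf), ← ht]
    rw [← Category.assoc, K.p_fromOpcycles]
    rfl

theorem exists_map_eq_zero_of_colimit_ι_eq_zero {D : Type} [SmallCategory D] [IsFiltered D]
    (F : D ⥤ ModuleCat.{u} R ⥤ ModuleCat.{u} R) (Y : ModuleCat.{u} R) (j : D)
    (x : (F.obj j).obj Y) (h : ((colimit.ι F j).app Y).hom x = 0) :
    ∃ (k : D) (a : j ⟶ k), ((F.map a).app Y).hom x = 0 := by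
  have hc := isColimitOfPreserves ((evaluation _ _).obj Y) (colimit.isColimit F)
  have : PreservesFilteredColimitsOfSize.{0, 0} (forget (ModuleCat.{u} R)) :=
    preservesFilteredColimitsOfSize_shrink.{0, u, 0, u} _
  have : PreservesColimit (F ⋙ (evaluation _ _).obj Y) (forget (ModuleCat.{u} R)) :=
    inferInstance
  obtain ⟨k, a, b, hab⟩ := Concrete.isColimit_exists_of_rep_eq _ hc x (0 : (F.obj j).obj Y)
    (h.trans (map_zero _).symm)
  exact ⟨k, a, by simpa using hab.trans (map_zero _)⟩

/-- If the local cohomology module of Mathlib vanishes, then so does the direct limit `H J r M` of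
the derived-category `Ext` modules. -/
theorem H.subsingleton_of_localCohomology (J : Ideal R) (r : ℕ) (M : Type u) [AddCommGroup M]
    [Module R M] (h : Subsingleton ((localCohomology J r).obj (ModuleCat.of R M))) :
    Subsingleton (H J r M) := by
  refine subsingleton_of_forall_eq 0 fun z => ?_
  obtain ⟨n, x, rfl⟩ := H.exists_of z
  let P (n : ℕ) : ProjectiveResolution (quotPow J n) := projectiveResolution _
  obtain ⟨f, hf, rfl⟩ := (P n).extMk_surjective x (r + 1) rfl
  let F := localCohomology.diagram (localCohomology.idealPowersDiagram J) r
  let e := (derivedPoint (P n) f hf).unop.hom 1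
  have he : ((colimit.ι F (op (op n))).app (ModuleCat.of R M)).hom e = 0 :=
    h.elim _ _
  obtain ⟨k, a, ha⟩ := exists_map_eq_zero_of_colimit_ι_eq_zero F _ _ _ he
  obtain ⟨⟨m⟩⟩ := k
  have hnm : n ≤ m := a.unop.unop.down.down
  let φ : ProjectiveResolution.Hom (P m) (P n) (quotPowMap J hnm) :=
    { hom := ProjectiveResolution.lift (quotPowMap J hnm) (P m) (P n)
      hom_f_zero_comp_π_f_zero := ProjectiveResolution.lift_commutes_zero _ _ _ }
  have hf' : (P m).complex.d (r + 1) r ≫ φ.hom.f r ≫ f = 0 := by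
    simp [← φ.hom.comm_assoc, hf]
  rw [← H.of_transition hnm, ProjectiveResolution.mk₀_comp_extMk f _ rfl hf φ,
    extMk_eq_zero_of_derivedPoint_eq_zero (P m) _ hf', map_zero]
  rw [← map_derivedPoint (P n) f hf φ hf']
  apply Quiver.Hom.unop_inj
  ext
  exact ha

end Link

/-! ### Adding a generator to the ideal -/

section Generators

variable {R : Type u} [CommRing R]

theorem exists_injective_embedding (M : Type u) [AddCommGroup M] [Module R M] :
    ∃ (E : Type u) (_ : AddCommGroup E) (_ : Module R E) (_ : Module.Injective R E)
      (f : M →ₗ[R] E), Function.Injective f := by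
  let E : ModuleCat.{u} R := Injective.under (ModuleCat.of R M)
  have hE : Injective (ModuleCat.of R E) := inferInstanceAs (Injective E)
  exact ⟨E, inferInstance, inferInstance, Module.injective_module_of_injective_object R E,
    (Injective.ι (ModuleCat.of R M)).hom, (ModuleCat.mono_iff_injective _).1 inferInstance⟩

section Shift

variable {M E : Type u} [AddCommGroup M] [Module R M] [AddCommGroup E] [Module R E]
  {f : M →ₗ[R] E}

theorem map_mem_Γ {J : Ideal R} (g : M →ₗ[R] E) {u : M} (hu : u ∈ Γ J M) : g u ∈ Γ J E := by
  obtain ⟨n, hn⟩ := hu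
  exact ⟨n, fun a ha => by rw [← map_smul, hn a ha, map_zero]⟩

theorem mem_Γ_of_injective {J : Ideal R} (hf : Function.Injective f) {u : M} (hu : f u ∈ Γ J E) :
    u ∈ Γ J M := by
  obtain ⟨n, hn⟩ := hu
  exact ⟨n, fun a ha => hf (by rw [map_smul, hn a ha, map_zero])⟩

theorem exact_mkQ_range (f : M →ₗ[R] E) :
    Function.Exact f (LinearMap.range f).mkQ := by
  intro e
  rw [Submodule.mkQ_apply, Submodule.Quotient.mk_eq_zero]
  rfl

/-- Dimension shifting along an embedding into an injective module. -/
theorem H.subsingleton_shift_iff [Module.Injective R E] (hf : Function.Injective f) (J : Ideal R)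
    (i : ℕ) : Subsingleton (H J (i + 1) (E ⧸ LinearMap.range f)) ↔
      Subsingleton (H J (i + 2) M) := by
  obtain ⟨-, δ, h1, h2⟩ := H.exact J hf (exact_mkQ_range f) (Submodule.mkQ_surjective _) (i + 1)
  have := H.subsingleton_of_injective J i E
  have := H.subsingleton_of_injective J (i + 1) E
  constructor
  · intro h
    refine subsingleton_of_forall_eq 0 fun z => ?_
    obtain ⟨w, rfl⟩ := (h2 z).1 (Subsingleton.elim _ _)
    rw [Subsingleton.elim w 0, map_zero]
  · intro h
    refine subsingleton_of_forall_eq 0 fun z => ?_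
    obtain ⟨w, rfl⟩ := (h1 z).1 (Subsingleton.elim _ _)
    rw [Subsingleton.elim w 0, map_zero]

/-- For an embedding `f` of `M` into an injective module `E`, the module `H^1_J(M)` is the cokernel of
`Γ_J(E) → Γ_J(E ⧸ M)`. -/
theorem H.subsingleton_one_iff [Module.Injective R E] (hf : Function.Injective f) (J : Ideal R) :
    Subsingleton (H J 1 M) ↔ ∀ w ∈ Γ J (E ⧸ LinearMap.range f),
      ∃ e ∈ Γ J E, (LinearMap.range f).mkQ e = w := by
  obtain ⟨-, δ, h1, h2⟩ := H.exact J hf (exact_mkQ_range f) (Submodule.mkQ_surjective _) 0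
  have := H.subsingleton_of_injective J 0 E
  constructor
  · intro h w hw
    rw [← H.range_ι] at hw
    obtain ⟨w, rfl⟩ := hw
    obtain ⟨e, rfl⟩ := (h1 w).1 (Subsingleton.elim (α := H J 1 M) _ _)
    refine ⟨H.ι J E e, ?_, (H.ι_map _ _).symm⟩
    rw [← H.range_ι]
    exact ⟨e, rfl⟩
  · intro h
    refine subsingleton_of_forall_eq 0 fun z => ?_
    obtain ⟨w, rfl⟩ := (h2 z).1 (Subsingleton.elim (α := H J 1 E) _ _)
    obtain ⟨e, he, hew⟩ := h (H.ι J _ w) (by rw [← H.range_ι]; exact ⟨w, rfl⟩)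
    rw [← H.range_ι] at he
    obtain ⟨e, rfl⟩ := he
    rw [← H.ι_map] at hew
    exact (h1 w).2 ⟨e, H.ι_injective _ _ hew⟩

end Shift

theorem H.subsingleton_zero_iff {J : Ideal R} {M : Type u} [AddCommGroup M] [Module R M] :
    Subsingleton (H J 0 M) ↔ Γ J M = ⊥ := by
  rw [← H.range_ι, LinearMap.range_eq_bot]
  constructor
  · intro h
    ext z
    rw [Subsingleton.elim z 0, map_zero, LinearMap.zero_apply]
  · intro h
    refine subsingleton_of_forall_eq 0 fun z => H.ι_injective J M ?_
    rw [h]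
    rfl

theorem mem_Γ_sup_span_singleton {J : Ideal R} {x : R} {M : Type u} [AddCommGroup M] [Module R M]
    {u : M} : u ∈ Γ (J ⊔ Ideal.span {x}) M ↔ u ∈ Γ J M ∧ ∃ k : ℕ, x ^ k • u = 0 := by
  constructor
  · rintro ⟨n, h⟩
    refine ⟨⟨n, fun a ha => h a (Ideal.pow_right_mono le_sup_left n ha)⟩, n, h _ ?_⟩
    exact Ideal.pow_mem_pow (Ideal.mem_sup_right (Ideal.mem_span_singleton_self x)) n
  · rintro ⟨⟨n, hn⟩, k, hk⟩
    refine ⟨n + k, fun a ha => ?_⟩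
    have h1 := Ideal.sup_pow_add_le_pow_sup_pow ha
    rw [Ideal.span_singleton_pow] at h1
    obtain ⟨b, hb, c, hc, rfl⟩ := Submodule.mem_sup.1 h1
    obtain ⟨c, rfl⟩ := Ideal.mem_span_singleton'.1 hc
    rw [add_smul, hn b hb, mul_smul, hk, smul_zero, add_zero]

/-- The localisation map `Γ_J(M) → Γ_J(M)_x` is surjective, stated elementwise: modulo `x`-power
torsion, every element of `Γ_J(M)` is `x` times an element of `Γ_J(M)`. -/
def Divisible (J : Ideal R) (x : R) (M : Type u) [AddCommGroup M] [Module R M] : Prop :=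
  ∀ u ∈ Γ J M, ∃ v ∈ Γ J M, ∃ m : ℕ, x ^ m • (u - x • v) = 0

theorem Divisible.pow {J : Ideal R} {x : R} {M : Type u} [AddCommGroup M] [Module R M]
    (h : Divisible J x M) (k : ℕ) : ∀ u ∈ Γ J M, ∃ v ∈ Γ J M, ∃ m : ℕ,
      x ^ m • (u - x ^ k • v) = 0 := by
  induction k with
  | zero => exact fun u hu => ⟨u, hu, 0, by simp⟩
  | succ k ih =>
    intro u hu
    obtain ⟨v, hv, m, hm⟩ := ih u hu
    obtain ⟨w, hw, n, hn⟩ := h v hv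
    refine ⟨w, hw, m + n, ?_⟩
    have : u - x ^ (k + 1) • w = (u - x ^ k • v) + x ^ k • (v - x • w) := by
      rw [smul_sub, smul_smul, pow_succ]
      abel
    rw [this, smul_add, pow_add, mul_comm, mul_smul, hm, smul_zero, zero_add, mul_comm, mul_smul,
      smul_comm (x ^ n), hn, smul_zero, smul_zero]

/-- For injective `E` the map `Γ_J(E) → Γ_J(E)_x` is surjective: if the colon ideals `(J ^ s : x ^ m)`
stabilise at `m` and `J ^ s` kills `e`, then `x ^ (m + 1) ↦ x ^ m • e` is a well-defined map on a
submodule of `R ⧸ J ^ s` and extends to all of `R ⧸ J ^ s`. -/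
theorem divisible_of_injective [IsNoetherianRing R] (J : Ideal R) (x : R) (E : Type u)
    [AddCommGroup E] [Module R E] [Module.Injective R E] : Divisible J x E := by
  rintro e ⟨s, hs⟩
  -- The ascending chain of colon ideals `(J ^ s : x ^ m)` stabilises.
  let c : ℕ →o Ideal R :=
    ⟨fun m => Submodule.comap (LinearMap.lsmul R R (x ^ m)) (J ^ s), by
      refine monotone_nat_of_le_succ fun m a ha => ?_
      have : x ^ m * a ∈ J ^ s := ha
      change x ^ (m + 1) * a ∈ J ^ s
      rw [pow_succ', mul_assoc]
      exact Ideal.mul_mem_left _ _ this⟩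
  obtain ⟨m, hm⟩ := monotone_stabilizes_iff_noetherian.2 ‹IsNoetherianRing R› c
  let φ : R →ₗ[R] R ⧸ J ^ s := (J ^ s).mkQ ∘ₗ LinearMap.lsmul R R (x ^ (m + 1))
  let ψ : R →ₗ[R] E := LinearMap.toSpanSingleton R E (x ^ m • e)
  have hker : LinearMap.ker φ ≤ LinearMap.ker ψ := by
    intro a ha
    have h1 : x ^ (m + 1) * a ∈ J ^ s := (Submodule.Quotient.mk_eq_zero _).1 ha
    have h2 : a ∈ c m := by
      rw [hm (m + 1) (Nat.le_succ m)]
      exact h1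
    have h3 : x ^ m * a ∈ J ^ s := h2
    change a • x ^ m • e = 0
    rw [smul_smul, mul_comm, hs _ h3]
  obtain ⟨h, hh⟩ := Module.Injective.out ((LinearMap.ker φ).liftQ φ le_rfl)
    (LinearMap.ker_eq_bot.1 (Submodule.ker_liftQ_eq_bot _ _ _ le_rfl))
    ((LinearMap.ker φ).liftQ ψ hker)
  have h1 : h (φ 1) = ψ 1 := hh (Submodule.Quotient.mk 1)
  refine ⟨h (Submodule.Quotient.mk 1), ⟨s, fun a ha => ?_⟩, m, ?_⟩
  · rw [← map_smul, ← Submodule.Quotient.mk_smul, (Submodule.Quotient.mk_eq_zero _).2, map_zero]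
    simpa using ha
  · have h2 : φ 1 = x ^ (m + 1) • Submodule.Quotient.mk 1 := rfl
    have h3 : ψ 1 = x ^ m • e := one_smul _ _
    rw [h2, h3, map_smul] at h1
    rw [smul_sub, smul_smul, ← pow_succ, h1, sub_self]

/-- Adding one generator `x` to `J` in degree one, where `Divisible` plays the role of the surjectivity
of `H^0_J(M) → H^0_J(M)_x`. -/
theorem H.subsingleton_one_sup {J : Ideal R} {x : R} {M : Type u} [AddCommGroup M] [Module R M]
    (hN : Divisible J x M) (h : Subsingleton (H J 1 M)) :
    Subsingleton (H (J ⊔ Ideal.span {x}) 1 M) := by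
  obtain ⟨E, _, _, _, f, hf⟩ := exists_injective_embedding (R := R) M
  rw [H.subsingleton_one_iff hf] at h ⊢
  intro w hw
  rw [mem_Γ_sup_span_singleton] at hw
  obtain ⟨hw, k, hk⟩ := hw
  obtain ⟨e, he, rfl⟩ := h w hw
  rw [← map_smul, Submodule.mkQ_apply, Submodule.Quotient.mk_eq_zero] at hk
  obtain ⟨u, hu⟩ := hk
  have huΓ : u ∈ Γ J M := mem_Γ_of_injective hf (by rw [hu]; exact Submodule.smul_mem _ _ he)
  obtain ⟨v, hv, m, hm⟩ := hN.pow k u huΓ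
  refine ⟨e - f v, ?_, ?_⟩
  · rw [mem_Γ_sup_span_singleton]
    refine ⟨Submodule.sub_mem _ he (map_mem_Γ f hv), m + k, ?_⟩
    rw [pow_add, mul_smul, smul_sub (x ^ k), ← hu, ← map_smul, ← map_sub, ← map_smul, hm, map_zero]
  · rw [map_sub, sub_eq_self, Submodule.mkQ_apply, Submodule.Quotient.mk_eq_zero]
    exact ⟨v, rfl⟩

/-- Adding one generator to `J` in degrees at least two, by dimension shifting. -/
theorem H.subsingleton_sup [IsNoetherianRing R] {J : Ideal R} {x : R} (r : ℕ) (M : Type u)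
    [AddCommGroup M] [Module R M] (h : Subsingleton (H J (r + 1) M))
    (h' : Subsingleton (H J (r + 2) M)) : Subsingleton (H (J ⊔ Ideal.span {x}) (r + 2) M) := by
  induction r generalizing M with
  | zero =>
    obtain ⟨E, _, _, _, f, hf⟩ := exists_injective_embedding (R := R) M
    rw [← H.subsingleton_shift_iff hf] at h' ⊢
    refine H.subsingleton_one_sup ?_ h'
    intro w hw
    obtain ⟨e, he, rfl⟩ := (H.subsingleton_one_iff hf J).1 h w hw
    obtain ⟨v, hv, m, hm⟩ := divisible_of_injective J x E e he
    refine ⟨_, map_mem_Γ (LinearMap.range f).mkQ hv, m, ?_⟩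
    rw [← map_smul, ← map_sub, ← map_smul, hm, map_zero]
  | succ r ih =>
    obtain ⟨E, _, _, _, f, hf⟩ := exists_injective_embedding (R := R) M
    rw [← H.subsingleton_shift_iff hf] at h h' ⊢
    exact ih _ h h'

/-- The ideal generated by the first `k` terms of a sequence. -/
def genIdeal (x : ℕ → R) : ℕ → Ideal R
  | 0 => ⊥
  | k + 1 => genIdeal x k ⊔ Ideal.span {x k}

variable [IsNoetherianRing R]

/-- Local cohomology vanishes above the number of generators of the ideal. -/
theorem H.subsingleton_genIdeal (x : ℕ → R) (k i : ℕ) (M : Type u) [AddCommGroup M] [Module R M] :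
    Subsingleton (H (genIdeal x k) (k + i + 1) M) := by
  induction k generalizing i with
  | zero => exact H.subsingleton_bot _ M
  | succ k ih =>
    rw [show k + 1 + i + 1 = (k + i) + 2 by omega]
    exact H.subsingleton_sup _ M (ih i) (ih (i + 1))

/-- A module that is torsion for the ideal has no local cohomology in positive degrees. -/
theorem H.subsingleton_of_torsion (x : ℕ → R) (k i : ℕ) (M : Type u) [AddCommGroup M] [Module R M]
    (hM : ∀ u : M, u ∈ Γ (genIdeal x k) M) :
    Subsingleton (H (genIdeal x k) (i + 1) M) := by
  induction k generalizing i with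
  | zero => exact H.subsingleton_bot _ M
  | succ k ih =>
    have h := fun u => mem_Γ_sup_span_singleton.1 (hM u)
    have ih' := fun i => ih i fun u => (h u).1
    cases i with
    | zero =>
      refine H.subsingleton_one_sup (fun u hu => ⟨0, zero_mem _, ?_⟩) (ih' 0)
      simpa using (h u).2
    | succ i => exact H.subsingleton_sup i M (ih' i) (ih' (i + 1))

theorem H.subsingleton_succ (x : ℕ → R) (r : ℕ) (M : Type u) [AddCommGroup M] [Module R M]
    (h : Subsingleton (H (genIdeal x r) r M)) :
    Subsingleton (H (genIdeal x (r + 1)) (r + 1) M) := by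
  cases r with
  | zero =>
    refine H.subsingleton_one_sup (fun u hu => ⟨0, zero_mem _, 0, ?_⟩)
      (H.subsingleton_genIdeal x 0 0 M)
    rw [H.subsingleton_zero_iff.1 h, Submodule.mem_bot] at hu
    simp [hu]
  | succ r => exact H.subsingleton_sup r M h (H.subsingleton_genIdeal x (r + 1) 0 M)

/-- Vanishing of `H^r` for the first `r` members of a sequence forces vanishing of `H^d` for the first
`d`. -/
theorem H.subsingleton_of_le (x : ℕ → R) {r d : ℕ} (hrd : r ≤ d) (M : Type u) [AddCommGroup M]
    [Module R M] (h : Subsingleton (H (genIdeal x r) r M)) :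
    Subsingleton (H (genIdeal x d) d M) := by
  induction d, hrd using Nat.le_induction with
  | base => exact h
  | succ d _ ih => exact H.subsingleton_succ x d M ih

end Generators

/-! ### Artinian modules -/

section Artinian

variable {R : Type u} [CommRing R] {N : Type u} [AddCommGroup N] [Module R N]

/-- A module on which every element is killed by a power of `y` is Artinian as soon as the
kernel of `y` is. -/
theorem isArtinian_of_ker (y : R) (htors : ∀ u : N, ∃ n : ℕ, y ^ n • u = 0)
    [hK : IsArtinian R (LinearMap.ker (LinearMap.lsmul R N y))] : IsArtinian R N := by
  rw [← monotone_stabilizes_iff_artinian] at hK ⊢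
  intro f
  set L : ℕ → Submodule R N := fun j => OrderDual.ofDual (f j) with hL
  have hLanti : ∀ {a b : ℕ}, a ≤ b → L b ≤ L a := fun h => f.monotone h
  let K := LinearMap.ker (LinearMap.lsmul R N y)
  -- `V j i` is the trace on `ker y` of `y ^ i • L j`; it is antitone in both indices.
  let V : ℕ → ℕ → Submodule R K := fun j i =>
    Submodule.comap K.subtype (Submodule.map (LinearMap.lsmul R N (y ^ i)) (L j))
  have hV : ∀ {a b c e : ℕ}, a ≤ b → c ≤ e → V b e ≤ V a c := by
    intro a b c e hab hce
    refine Submodule.comap_mono ?_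
    rintro _ ⟨w, hw, rfl⟩
    refine ⟨y ^ (e - c) • w, (L a).smul_mem _ (hLanti hab hw), ?_⟩
    simp only [LinearMap.lsmul_apply, smul_smul, ← pow_add, Nat.add_sub_cancel' hce]
  obtain ⟨n, hn⟩ := hK ⟨fun j => OrderDual.toDual (V j j), fun a b h => hV h h⟩
  have hn' : ∀ j, n ≤ j → V n n = V j j := hn
  have hst : ∀ i, ∃ a, ∀ j, a ≤ j → V a i = V j i := fun i =>
    hK ⟨fun j => OrderDual.toDual (V j i), fun a b h => hV h le_rfl⟩
  choose a ha using hst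
  let n' := n ⊔ (Finset.range n).sup a
  have key : ∀ j, n' ≤ j → ∀ i, V n' i ≤ V j i := by
    intro j hj i
    by_cases hi : i < n
    · have h1 : a i ≤ n' := (Finset.le_sup (f := a) (Finset.mem_range.2 hi)).trans le_sup_right
      rw [← ha i n' h1, ha i j (h1.trans hj)]
    · push Not at hi
      have h1 : n ≤ n' := le_sup_left
      calc V n' i ≤ V n n := hV h1 hi
        _ = V (j ⊔ i) (j ⊔ i) := hn' _ (hi.trans le_sup_right)
        _ ≤ V j i := hV le_sup_left le_sup_right
  refine ⟨n', fun j hj => le_antisymm (hLanti hj : L j ≤ L n') ?_⟩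
  change L n' ≤ L j
  have main : ∀ k : ℕ, ∀ u ∈ L n', y ^ k • u = 0 → u ∈ L j := by
    intro k
    induction k with
    | zero => intro u _ h; rw [pow_zero, one_smul] at h; rw [h]; exact zero_mem _
    | succ k ih =>
      intro u hu h
      have hk : y ^ k • u ∈ K := by
        rw [LinearMap.mem_ker, LinearMap.lsmul_apply, smul_smul, ← pow_succ', h]
      have : (⟨y ^ k • u, hk⟩ : K) ∈ V j k := key j hj k ⟨u, hu, rfl⟩
      obtain ⟨w, hw, hwu⟩ := this
      have h2 := ih (u - w) (sub_mem hu (hLanti hj hw)) (by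
        rw [smul_sub, sub_eq_zero]; exact hwu.symm)
      simpa using add_mem h2 hw
  intro u hu
  obtain ⟨k, hk⟩ := htors u
  exact main k u hu hk

/-- Fitting's lemma: on a submodule `X` of an Artinian module that is not a sum of two proper submodules
of `X`, multiplication by `y` is either surjective or nilpotent. -/
theorem surjective_or_nilpotent [IsArtinian R N] {X : Submodule R N}
    (hX : ∀ A B : Submodule R N, A < X → B < X → A ⊔ B ≠ X) (y : R) :
    X ≤ X.map (LinearMap.lsmul R N y) ∨ y ∈ X.annihilator.radical := by
  have hle : ∀ n : ℕ, X.map (LinearMap.lsmul R N (y ^ n)) ≤ X := by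
    rintro n _ ⟨w, hw, rfl⟩
    exact X.smul_mem _ hw
  obtain ⟨n, hn⟩ := (monotone_stabilizes_iff_artinian (R := R) (M := N)).2 inferInstance
    ⟨fun n => OrderDual.toDual (X.map (LinearMap.lsmul R N (y ^ n))), by
      intro a b hab
      change X.map (LinearMap.lsmul R N (y ^ b)) ≤ X.map (LinearMap.lsmul R N (y ^ a))
      rintro _ ⟨w, hw, rfl⟩
      refine ⟨y ^ (b - a) • w, X.smul_mem _ hw, ?_⟩
      simp only [LinearMap.lsmul_apply, smul_smul, ← pow_add, Nat.add_sub_cancel' hab]⟩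
  have hn1 : ∀ j, n ≤ j → X.map (LinearMap.lsmul R N (y ^ n)) =
    X.map (LinearMap.lsmul R N (y ^ j)) := hn
  have hst : X.map (LinearMap.lsmul R N (y ^ (n + 1))) =
      X.map (LinearMap.lsmul R N (y ^ ((n + 1) + (n + 1)))) := by
    exact (hn1 _ (by lia)).symm.trans (hn1 _ (by lia))
  set A := X ⊓ LinearMap.ker (LinearMap.lsmul R N (y ^ (n + 1))) with hA
  set B := X.map (LinearMap.lsmul R N (y ^ (n + 1))) with hB
  have hsup : A ⊔ B = X := by
    refine le_antisymm (sup_le inf_le_left (hle _)) fun u hu => ?_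
    have h1 : y ^ (n + 1) • u ∈ B := ⟨u, hu, rfl⟩
    rw [hst] at h1
    obtain ⟨w, hw, hwu⟩ := h1
    refine Submodule.mem_sup.2 ⟨u - y ^ (n + 1) • w, ⟨sub_mem hu (X.smul_mem _ hw), ?_⟩,
      y ^ (n + 1) • w, ⟨w, hw, rfl⟩, sub_add_cancel _ _⟩
    simp only [LinearMap.lsmul_apply] at hwu
    rw [SetLike.mem_coe, LinearMap.mem_ker, LinearMap.lsmul_apply, smul_sub, smul_smul, ← pow_add,
      hwu, sub_self]
  rcases eq_or_lt_of_le (inf_le_left : A ≤ X) with h | h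
  · right
    refine ⟨n + 1, Submodule.mem_annihilator.2 fun u hu => ?_⟩
    rw [← h] at hu
    exact hu.2
  · rcases eq_or_lt_of_le (hle (n + 1) : B ≤ X) with h' | h'
    · left
      intro u hu
      rw [← h'] at hu
      obtain ⟨w, hw, rfl⟩ := hu
      exact ⟨y ^ n • w, X.smul_mem _ hw, by
        simp only [LinearMap.lsmul_apply, smul_smul, ← pow_succ']⟩
    · exact absurd hsup (hX A B h h')

section Local

variable [IsNoetherianRing R] [IsLocalRing R]

theorem isArtinianRing_quotient_pow (k : ℕ) : IsArtinianRing (R ⧸ maximalIdeal R ^ (k + 1)) := by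
  have hne : maximalIdeal R ^ (k + 1) ≠ ⊤ := fun h =>
    (maximalIdeal.isMaximal R).ne_top (top_le_iff.1 (h ▸ Ideal.pow_le_self k.succ_ne_zero))
  have : Nontrivial (R ⧸ maximalIdeal R ^ (k + 1)) := Ideal.Quotient.nontrivial_iff.mpr hne
  have := IsLocalRing.of_surjective' (Ideal.Quotient.mk (maximalIdeal R ^ (k + 1)))
    Ideal.Quotient.mk_surjective
  have := IsLocalHom.of_surjective (Ideal.Quotient.mk (maximalIdeal R ^ (k + 1)))
    Ideal.Quotient.mk_surjective
  rw [isArtinianRing_iff_isNilpotent_maximalIdeal]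
  refine ⟨k + 1, ?_⟩
  have : (maximalIdeal R).map (Ideal.Quotient.mk (maximalIdeal R ^ (k + 1))) =
      maximalIdeal (R ⧸ maximalIdeal R ^ (k + 1)) := by
    ext x
    obtain ⟨x, rfl⟩ := Ideal.Quotient.mk_surjective x
    simp [sup_eq_left.mpr (le_maximalIdeal hne)]
  rw [← this, ← Ideal.map_pow, Ideal.map_quotient_self, Ideal.zero_eq_bot]

/-- Over a Noetherian local ring, finite generation and the descending chain condition agree for
modules killed by a power of the maximal ideal. -/
theorem finite_iff_isArtinian {k : ℕ} (hk : maximalIdeal R ^ k ≤ Module.annihilator R N) :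
    Module.Finite R N ↔ IsArtinian R N := by
  have hk' : maximalIdeal R ^ (k + 1) ≤ Module.annihilator R N :=
    (Ideal.pow_le_pow_right k.le_succ).trans hk
  have ht : Module.IsTorsionBySet R N (maximalIdeal R ^ (k + 1) : Ideal R) :=
    (Module.isTorsionBySet_iff_subset_annihilator R N).2 hk'
  let _ := ht.module
  have : IsScalarTower R (R ⧸ maximalIdeal R ^ (k + 1)) N := ht.isScalarTower
  have := isArtinianRing_quotient_pow (R := R) k
  have htfae := IsArtinianRing.tfae (R ⧸ maximalIdeal R ^ (k + 1)) N
  constructor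
  · intro h
    have h1 : Module.Finite (R ⧸ maximalIdeal R ^ (k + 1)) N :=
      Module.Finite.of_restrictScalars_finite R _ _
    have h2 : IsArtinian (R ⧸ maximalIdeal R ^ (k + 1)) N := (htfae.out 0 2).1 h1
    exact isArtinian_of_surjective_algebraMap (R := R ⧸ maximalIdeal R ^ (k + 1))
      Ideal.Quotient.mk_surjective
  · intro h
    have h1 : IsArtinian (R ⧸ maximalIdeal R ^ (k + 1)) N := isArtinian_of_tower R h
    have h2 : Module.Finite (R ⧸ maximalIdeal R ^ (k + 1)) N := (htfae.out 2 0).1 h1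
    exact Module.Finite.trans (R ⧸ maximalIdeal R ^ (k + 1)) N

/-- An Artinian module `N` is, up to a finitely generated submodule, divisible by every `y` outside
finitely many nonmaximal primes (the nonmaximal attached primes of `N`). -/
theorem exists_finite_primes [IsArtinian R N] (X : Submodule R N) :
    ∃ F : Finset (Ideal R), (∀ p ∈ F, p.IsPrime ∧ p ≠ maximalIdeal R) ∧
      ∀ y : R, (∀ p ∈ F, y ∉ p) → ∃ G : Submodule R N, G.FG ∧
        G ≤ X ∧ X ≤ G ⊔ X.map (LinearMap.lsmul R N y) := by
  classical
  induction X using IsArtinian.induction with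
  | hgt X ih =>
  by_cases hX : ∀ A B : Submodule R N, A < X → B < X → A ⊔ B ≠ X
  · by_cases hfg : X.FG
    · exact ⟨∅, by simp, fun y _ => ⟨X, hfg, le_rfl, le_sup_left⟩⟩
    have hprime : X.annihilator.radical.IsPrime := by
      refine ⟨fun h => hfg ?_, fun {a b} hab => ?_⟩
      · obtain ⟨n, hn⟩ := (Ideal.eq_top_iff_one _).1 h
        rw [one_pow, ← Ideal.eq_top_iff_one, Submodule.annihilator_eq_top_iff] at hn
        exact hn ▸ Submodule.fg_bot
      · by_contra hcon
        push Not at hcon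
        have ha := (surjective_or_nilpotent hX a).resolve_right hcon.1
        have hb := (surjective_or_nilpotent hX b).resolve_right hcon.2
        have hab1 : X ≤ X.map (LinearMap.lsmul R N (a * b)) := fun u hu => by
          obtain ⟨v, hv, rfl⟩ := ha hu
          obtain ⟨w, hw, rfl⟩ := hb hv
          exact ⟨w, hw, by simp only [LinearMap.lsmul_apply, mul_smul]⟩
        obtain ⟨n, hn⟩ := hab
        have hpow : ∀ k : ℕ, ∀ u ∈ X, ∃ w ∈ X, (a * b) ^ k • w = u := by
          intro k
          induction k with
          | zero => exact fun u hu => ⟨u, hu, by simp⟩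
          | succ k ih =>
            intro u hu
            obtain ⟨w, hw, rfl⟩ := ih u hu
            obtain ⟨v, hv, rfl⟩ := hab1 hw
            exact ⟨v, hv, by simp [pow_succ, mul_smul]⟩
        have : X = ⊥ := (Submodule.eq_bot_iff _).2 fun u hu => by
          obtain ⟨w, hw, rfl⟩ := hpow n u hu
          exact Submodule.mem_annihilator.1 hn w hw
        exact hfg (this ▸ Submodule.fg_bot)
    have hne : X.annihilator.radical ≠ maximalIdeal R := fun h => hfg (by
      obtain ⟨k, hk⟩ := Ideal.exists_pow_le_of_le_radical_of_fg h.ge (IsNoetherian.noetherian _)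
      exact Module.Finite.iff_fg.1 ((finite_iff_isArtinian (N := X) hk).2 inferInstance))
    refine ⟨{X.annihilator.radical}, by simpa using ⟨hprime, hne⟩, fun y hy => ⟨⊥,
      Submodule.fg_bot, bot_le, ?_⟩⟩
    rw [bot_sup_eq]
    exact (surjective_or_nilpotent hX y).resolve_right (hy _ (Finset.mem_singleton_self _))
  · push Not at hX
    obtain ⟨A, B, hA, hB, rfl⟩ := hX
    obtain ⟨F₁, h1, h1'⟩ := ih A hA
    obtain ⟨F₂, h2, h2'⟩ := ih B hB
    refine ⟨F₁ ∪ F₂, fun p hp => (Finset.mem_union.1 hp).elim (h1 p) (h2 p), fun y hy => ?_⟩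
    obtain ⟨G₁, g1, g1', g1''⟩ := h1' y fun p hp => hy p (Finset.mem_union_left _ hp)
    obtain ⟨G₂, g2, g2', g2''⟩ := h2' y fun p hp => hy p (Finset.mem_union_right _ hp)
    refine ⟨G₁ ⊔ G₂, g1.sup g2, sup_le_sup g1' g2', ?_⟩
    rw [Submodule.map_sup, sup_sup_sup_comm]
    exact sup_le_sup g1'' g2''

end Local

end Artinian

/-! ### Torsion-free quotients and regular elements -/

section Torsion

open scoped Pointwise

variable {R : Type u} [CommRing R] {M : Type u} [AddCommGroup M] [Module R M]

/-- The long exact sequence attached to multiplication by an `M`-regular element. -/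
theorem H.exact_regular (J : Ideal R) (i : ℕ) {y : R} (hy : IsSMulRegular M y) :
    ∃ (π : H J i M →ₗ[R] H J i (QuotSMulTop y M)) (δ : H J i (QuotSMulTop y M) →ₗ[R] H J (i + 1) M),
      (∀ z, π z = 0 ↔ ∃ w, y • w = z) ∧ Function.Exact π δ ∧ ∀ z, y • z = 0 ↔ ∃ w, δ w = z := by
  have hf : Function.Injective (y • LinearMap.id : M →ₗ[R] M) := hy
  have hfg : Function.Exact (y • LinearMap.id : M →ₗ[R] M)
      (Submodule.mkQ (y • (⊤ : Submodule R M))) := by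
    intro u
    rw [Submodule.mkQ_apply, Submodule.Quotient.mk_eq_zero, Submodule.mem_smul_pointwise_iff_exists]
    simp
  obtain ⟨h1, δ, h2, h3⟩ := H.exact J hf hfg (Submodule.mkQ_surjective _) i
  refine ⟨_, δ, fun z => (h1 z).trans ?_, h2, fun z => ?_⟩
  · simp only [Set.mem_range, H.map_smul_id]
  · rw [← H.map_smul_id]
    exact h3 z

variable [IsNoetherianRing R]

theorem mem_Γ_iff_le_radical {J : Ideal R} {u : M} :
    u ∈ Γ J M ↔ J ≤ (Ideal.torsionOf R M u).radical := by
  constructor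
  · rintro ⟨n, hn⟩ a ha
    exact ⟨n, hn _ (Ideal.pow_mem_pow ha n)⟩
  · intro h
    exact Ideal.exists_pow_le_of_le_radical_of_fg h (IsNoetherian.noetherian _)

theorem Γ_quotient_eq_bot (J : Ideal R) : Γ J (M ⧸ Γ J M) = ⊥ := by
  rw [Submodule.eq_bot_iff]
  intro v hv
  obtain ⟨u, rfl⟩ := Submodule.mkQ_surjective _ v
  rw [Submodule.mkQ_apply, Submodule.Quotient.mk_eq_zero, mem_Γ_iff_le_radical]
  intro a ha
  obtain ⟨n, hn⟩ := hv
  have h1 := hn _ (Ideal.pow_mem_pow ha n)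
  rw [← map_smul, Submodule.mkQ_apply, Submodule.Quotient.mk_eq_zero] at h1
  obtain ⟨t, ht⟩ := h1
  refine ⟨t + n, ?_⟩
  rw [Ideal.mem_torsionOf_iff, pow_add, mul_smul]
  exact ht _ (Ideal.pow_mem_pow ha t)

/-- Dividing out the torsion submodule does not change local cohomology in positive degrees. -/
theorem H.bijective_mkQ (x : ℕ → R) (k i : ℕ) :
    Function.Bijective (H.map (genIdeal x k) (i + 1) (Γ (genIdeal x k) M).mkQ) := by
  set I := genIdeal x k
  have htors : ∀ u : Γ I M, u ∈ Γ I (Γ I M) := fun u =>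
    mem_Γ_of_injective (Submodule.subtype_injective _) u.2
  obtain ⟨h1, δ, h2, -⟩ := H.exact I (Submodule.subtype_injective (Γ I M))
    (LinearMap.exact_subtype_mkQ _) (Submodule.mkQ_surjective _) (i + 1)
  have s1 : Subsingleton (H I (i + 1) (Γ I M)) := H.subsingleton_of_torsion x k i _ htors
  have s2 : Subsingleton (H I (i + 2) (Γ I M)) := H.subsingleton_of_torsion x k (i + 1) _ htors
  constructor
  · rw [injective_iff_map_eq_zero]
    intro z hz
    obtain ⟨w, rfl⟩ := (h1 z).1 hz
    rw [Subsingleton.elim w 0, map_zero]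
  · intro z
    exact (h2 z).1 (Subsingleton.elim _ _)

end Torsion

section Admissible

variable {R : Type u} [CommRing R] [IsLocalRing R]

/-- `I` is a parameter ideal up to the annihilator of `M`: some power of the maximal ideal lies in
`I + Ann M`. For finitely generated `M` over a Noetherian ring this says that `M ⧸ I M` has finite
length. -/
def Adm (I : Ideal R) (M : Type u) [AddCommGroup M] [Module R M] : Prop :=
  ∃ s : ℕ, maximalIdeal R ^ s ≤ I ⊔ Module.annihilator R M

variable {I : Ideal R} {M N : Type u} [AddCommGroup M] [Module R M] [AddCommGroup N] [Module R N]

theorem Adm.of_surjective (h : Adm I M) (f : M →ₗ[R] N) (hf : Function.Surjective f) : Adm I N := by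
  obtain ⟨s, hs⟩ := h
  exact ⟨s, hs.trans (sup_le_sup_left (f.annihilator_le_of_surjective hf) _)⟩

theorem Adm.le_radical (h : Adm I M) {T : Ideal R} (h1 : I ≤ T.radical)
    (h2 : Module.annihilator R M ≤ T.radical) : maximalIdeal R ≤ T.radical := by
  obtain ⟨s, hs⟩ := h
  intro a ha
  rw [← Ideal.radical_idem]
  exact ⟨s, (hs.trans (sup_le h1 h2)) (Ideal.pow_mem_pow ha s)⟩

theorem Adm.exists_pow_smul (h : Adm I M) {i : ℕ} (z : H I i M) {y : R} (hy : y ∈ maximalIdeal R) :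
    ∃ n : ℕ, y ^ n • z = 0 := by
  obtain ⟨n, hn⟩ := H.exists_pow_smul_eq_zero z
  exact h.le_radical (T := Ideal.torsionOf R _ z)
    (fun a ha => ⟨n, hn _ (Ideal.pow_mem_pow ha n)⟩)
    (le_trans (fun a ha => H.smul_eq_zero_of_mem_annihilator ha z) Ideal.le_radical) hy

variable [IsNoetherianRing R]

theorem Adm.mem_Γ (h : Adm I M) {u : M} (hu : u ∈ Γ I M) : u ∈ Γ (maximalIdeal R) M := by
  rw [mem_Γ_iff_le_radical] at hu ⊢
  exact h.le_radical hu (le_trans (fun a ha => Module.mem_annihilator.1 ha u) Ideal.le_radical)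

/-- Prime avoidance: an element of `𝔪` that is regular on a module without `I`-torsion and avoids
finitely many nonmaximal primes. -/
theorem exists_regular [Module.Finite R M] (hI : I ≤ maximalIdeal R) (hM : Γ I M = ⊥)
    (F : Finset (Ideal R)) (hF : ∀ p ∈ F, p.IsPrime ∧ p ≠ maximalIdeal R) :
    ∃ y ∈ maximalIdeal R, IsSMulRegular M y ∧ ∀ p ∈ F, y ∉ p := by
  classical
  have hfin := associatedPrimes.finite R M
  have hass : ∀ p ∈ associatedPrimes R M, p.IsPrime ∧ p ≠ maximalIdeal R := by
    intro p hp
    refine ⟨hp.isPrime, ?_⟩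
    rintro rfl
    obtain ⟨h1, u, hu⟩ := (isAssociatedPrime_iff).1 hp
    have hu0 : u ∈ Γ I M := by
      refine ⟨1, fun a ha => ?_⟩
      rw [pow_one] at ha
      have := hI ha
      rwa [hu, Submodule.mem_colon_singleton, Submodule.mem_bot] at this
    rw [hM, Submodule.mem_bot] at hu0
    refine h1.ne_top ((Ideal.eq_top_iff_one _).2 ?_)
    rw [hu, Submodule.mem_colon_singleton, hu0, smul_zero]
    exact zero_mem _
  let S := F ∪ hfin.toFinset
  have hS : ∀ p ∈ S, p.IsPrime ∧ p ≠ maximalIdeal R := fun p hp =>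
    (Finset.mem_union.1 hp).elim (hF p) fun h => hass p (hfin.mem_toFinset.1 h)
  have hnot : ¬ ((maximalIdeal R : Set R) ⊆ ⋃ p ∈ (↑S : Set (Ideal R)), (p : Set R)) := by
    rw [Ideal.subset_union_prime (f := fun p : Ideal R => p) ⊥ ⊥ (fun p hp _ _ => (hS p hp).1)]
    rintro ⟨p, hp, hle⟩
    exact (hS p hp).2 ((maximalIdeal.isMaximal R).eq_of_le (hS p hp).1.ne_top hle).symm
  obtain ⟨y, hy, hy'⟩ := Set.not_subset.1 hnot
  simp only [Set.mem_iUnion, not_exists] at hy'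
  refine ⟨y, hy, ?_, fun p hp => hy' p (Finset.mem_union_left _ hp)⟩
  by_contra hreg
  have : y ∈ ⋃ p ∈ associatedPrimes R M, (p : Set R) := by
    rw [biUnion_associatedPrimes_eq_compl_regular]
    exact hreg
  simp only [Set.mem_iUnion] at this
  obtain ⟨p, hp, hyp⟩ := this
  exact hy' p (Finset.mem_union_right _ (hfin.mem_toFinset.2 hp)) hyp

/-- Over an ideal as in `Adm`, the torsion submodule is supported at the closed point, so dividing it
out preserves a positive dimension. -/
theorem supportDim_quotient_Γ {d : ℕ} (h : Adm I M) (hd : Module.supportDim R M = (d + 1 : ℕ)) :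
    Module.supportDim R (M ⧸ Γ I M) = (d + 1 : ℕ) := by
  refine le_antisymm ((Module.supportDim_le_of_surjective _ (Submodule.mkQ_surjective _)).trans
    hd.le) (hd.ge.trans ?_)
  have key : ∀ p ∈ Module.support R M, p ≠ closedPoint R → p ∈ Module.support R (M ⧸ Γ I M) := by
    intro p hp hpm
    obtain ⟨a, ha, hap⟩ : ∃ a ∈ maximalIdeal R, a ∉ p.asIdeal := by
      by_contra hcon
      push Not at hcon
      exact hpm (PrimeSpectrum.ext (((maximalIdeal.isMaximal R).eq_of_le p.2.ne_top hcon).symm))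
    rw [Module.mem_support_iff_exists_annihilator] at hp ⊢
    obtain ⟨u, hu⟩ := hp
    refine ⟨(Γ I M).mkQ u, fun b hb => ?_⟩
    rw [Submodule.mem_annihilator_span_singleton, ← map_smul, Submodule.mkQ_apply,
      Submodule.Quotient.mk_eq_zero] at hb
    obtain ⟨n, hn⟩ := h.mem_Γ hb
    have h1 : a ^ n * b ∈ p.asIdeal := hu (by
      rw [Submodule.mem_annihilator_span_singleton, mul_smul]
      exact hn _ (Ideal.pow_mem_pow ha n))
    exact (p.2.mem_or_mem h1).resolve_left fun h2 => hap (p.2.mem_of_pow_mem n h2)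
  by_cases hex : ∃ p ∈ Module.support R M, p ≠ closedPoint R
  · obtain ⟨q, hq, hqm⟩ := hex
    have hsub : Module.support R M ⊆ Module.support R (M ⧸ Γ I M) := by
      intro p hp
      by_cases hpm : p = closedPoint R
      · rw [hpm]
        exact Module.mem_support_mono (le_maximalIdeal q.2.ne_top : q.asIdeal ≤ _) (key q hq hqm)
      · exact key p hp hpm
    exact Order.krullDim_le_of_strictMono (fun a => ⟨a.1, hsub a.2⟩) fun {_ _} lt => lt
  · push Not at hex
    have : Subsingleton (Module.support R M) :=
      ⟨fun p q => Subtype.ext ((hex p p.2).trans (hex q q.2).symm)⟩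
    have h0 : Module.supportDim R M ≤ 0 := Order.krullDim_nonpos_of_subsingleton
    rw [hd] at h0
    exact absurd (by exact_mod_cast h0 : d + 1 ≤ 0) (by omega)

end Admissible

/-! ### Vanishing, Artinianness and nonvanishing -/

section Nonvanishing

open scoped Pointwise

variable {R : Type u} [CommRing R] [IsNoetherianRing R] [IsLocalRing R]

theorem supportDim_quotSMulTop_eq {M : Type u} [AddCommGroup M] [Module R M] [Module.Finite R M]
    {y : R} (hy : y ∈ maximalIdeal R) (hreg : IsSMulRegular M y) {d : ℕ}
    (hd : Module.supportDim R M = (d + 1 : ℕ)) :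
    Module.supportDim R (QuotSMulTop y M) = d := by
  have h := Module.supportDim_quotSMulTop_succ_eq_supportDim hreg hy
  rw [hd] at h
  generalize Module.supportDim R (QuotSMulTop y M) = s at h
  induction s using WithBot.recBotCoe with
  | bot =>
    rw [WithBot.bot_add] at h
    exact absurd h (WithBot.bot_ne_coe (a := ((d + 1 : ℕ) : ℕ∞)))
  | coe s =>
    have h' : s + 1 = ((d + 1 : ℕ) : ℕ∞) := by exact_mod_cast h
    have : s = d := by
      rw [Nat.cast_add, Nat.cast_one] at h'
      exact ENat.add_left_injective_of_ne_top ENat.one_ne_top h'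
    rw [this]
    rfl

theorem supportDim_quotSMulTop_lt {M : Type u} [AddCommGroup M] [Module R M] [Module.Finite R M]
    {y : R} (hy : y ∈ maximalIdeal R) (hreg : IsSMulRegular M y) {d : ℕ}
    (hd : Module.supportDim R M < (d + 1 : ℕ)) :
    Module.supportDim R (QuotSMulTop y M) < d := by
  have h := Module.supportDim_quotSMulTop_succ_eq_supportDim hreg hy
  by_contra hcon
  push Not at hcon
  refine absurd hd (not_lt.2 ?_)
  rw [← h, Nat.cast_add, Nat.cast_one]
  gcongr

variable (x : ℕ → R) (k : ℕ)

/-- Grothendieck's vanishing theorem: after removing torsion, a regular element `y ∈ 𝔪` acts injectively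
on `H^{i+1}_I(M)` by induction, while every class is killed by a power of `y`. -/
theorem H.subsingleton_of_supportDim_lt (hI : genIdeal x k ≤ maximalIdeal R) (i : ℕ)
    (M : Type u) [AddCommGroup M] [Module R M]
    [Module.Finite R M] (hM : Adm (genIdeal x k) M) (hdim : Module.supportDim R M < i) :
    Subsingleton (H (genIdeal x k) i M) := by
  induction i generalizing M with
  | zero =>
    rw [H.subsingleton_zero_iff]
    have : Subsingleton M := by
      rw [← Module.supportDim_eq_bot_iff_subsingleton R]
      by_contra hne
      obtain ⟨s, hs⟩ := WithBot.ne_bot_iff_exists.1 hne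
      rw [← hs] at hdim
      exact absurd (by exact_mod_cast hdim : s < 0) not_lt_zero
    exact Subsingleton.elim _ _
  | succ i ih =>
    have hM' := hM.of_surjective _ (Submodule.mkQ_surjective (Γ (genIdeal x k) M))
    obtain ⟨y, hy, hreg, -⟩ := exists_regular hI (Γ_quotient_eq_bot (M := M) (genIdeal x k)) ∅
      (by simp)
    have h0 := ih _ (hM'.of_surjective _ (Submodule.mkQ_surjective _))
      (supportDim_quotSMulTop_lt hy hreg ((Module.supportDim_le_of_surjective _
        (Submodule.mkQ_surjective _)).trans_lt hdim))
    obtain ⟨π, δ, -, -, h3⟩ := H.exact_regular (genIdeal x k) i hreg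
    have hinj : ∀ (n : ℕ) (z : H (genIdeal x k) (i + 1) (M ⧸ Γ (genIdeal x k) M)),
        y ^ n • z = 0 → z = 0 := by
      intro n
      induction n with
      | zero => intro z hz; rwa [pow_zero, one_smul] at hz
      | succ n ihn =>
        intro z hz
        rw [pow_succ, mul_smul] at hz
        obtain ⟨w, rfl⟩ := (h3 z).1 (ihn _ hz)
        rw [Subsingleton.elim w 0, map_zero]
    have hs : Subsingleton (H (genIdeal x k) (i + 1) (M ⧸ Γ (genIdeal x k) M)) :=
      subsingleton_of_forall_eq 0 fun z => by
        obtain ⟨n, hn⟩ := hM'.exists_pow_smul z hy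
        exact hinj n z hn
    exact (H.bijective_mkQ x k i).1.subsingleton

/-- A finitely generated module all of whose elements are `𝔪`-power torsion is Artinian. -/
theorem isArtinian_of_Γ {N : Type u} [AddCommGroup N] [Module R N] [Module.Finite R N]
    (hN : ∀ u : N, u ∈ Γ (maximalIdeal R) N) : IsArtinian R N := by
  classical
  have hrad : maximalIdeal R ≤ (Module.annihilator R N).radical := by
    intro a ha
    obtain ⟨S, hS⟩ := (Module.Finite.fg_top (R := R) (M := N))
    have h1 : ∀ u : N, ∃ n : ℕ, a ^ n • u = 0 := fun u => by
      obtain ⟨n, hn⟩ := hN u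
      exact ⟨n, hn _ (Ideal.pow_mem_pow ha n)⟩
    choose n hn using h1
    refine ⟨S.sup n, Module.mem_annihilator.2 fun u => ?_⟩
    have hle : (⊤ : Submodule R N) ≤ LinearMap.ker (LinearMap.lsmul R N (a ^ S.sup n)) := by
      rw [← hS, Submodule.span_le]
      intro v hv
      have hvS : n v ≤ S.sup n := Finset.le_sup (f := n) hv
      change a ^ S.sup n • v = 0
      rw [← Nat.sub_add_cancel hvS, pow_add, mul_smul, hn, smul_zero]
    exact hle (Submodule.mem_top (x := u))
  obtain ⟨t, ht⟩ := Ideal.exists_pow_le_of_le_radical_of_fg hrad (IsNoetherian.noetherian _)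
  exact (finite_iff_isArtinian ht).1 inferInstance

/-- Local cohomology of a finitely generated module is Artinian, by induction on the degree: after
removing torsion, the kernel of a regular element `y` on `H^{i+1}_I(M)` is a quotient of
`H^i_I(M ⧸ yM)`. -/
theorem H.isArtinian (hI : genIdeal x k ≤ maximalIdeal R) (i : ℕ)
    (M : Type u) [AddCommGroup M] [Module R M]
    [Module.Finite R M] (hM : Adm (genIdeal x k) M) : IsArtinian R (H (genIdeal x k) i M) := by
  induction i generalizing M with
  | zero =>
    have : IsArtinian R (Γ (genIdeal x k) M) := isArtinian_of_Γ fun u =>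
      mem_Γ_of_injective (Submodule.subtype_injective _) (hM.mem_Γ u.2)
    refine isArtinian_of_injective ((H.ι (genIdeal x k) M).codRestrict (Γ (genIdeal x k) M)
      fun z => ?_) fun a b hab => H.ι_injective _ M (congrArg Subtype.val hab)
    rw [← H.range_ι]
    exact ⟨z, rfl⟩
  | succ i ih =>
    have hM' := hM.of_surjective _ (Submodule.mkQ_surjective (Γ (genIdeal x k) M))
    obtain ⟨y, hy, hreg, -⟩ := exists_regular hI (Γ_quotient_eq_bot (M := M) (genIdeal x k)) ∅
      (by simp)
    have h0 := ih _ (hM'.of_surjective _ (Submodule.mkQ_surjective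
      (y • (⊤ : Submodule R (M ⧸ Γ (genIdeal x k) M)))))
    obtain ⟨π, δ, -, -, h3⟩ := H.exact_regular (genIdeal x k) i hreg
    have hker : LinearMap.ker (LinearMap.lsmul R
        (H (genIdeal x k) (i + 1) (M ⧸ Γ (genIdeal x k) M)) y) = LinearMap.range δ := by
      ext z
      exact h3 z
    have : IsArtinian R (LinearMap.ker (LinearMap.lsmul R
        (H (genIdeal x k) (i + 1) (M ⧸ Γ (genIdeal x k) M)) y)) := by
      rw [hker]
      exact isArtinian_of_surjective _ δ.rangeRestrict δ.surjective_rangeRestrict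
    have := isArtinian_of_ker y
      fun z : H (genIdeal x k) (i + 1) (M ⧸ Γ (genIdeal x k) M) => hM'.exists_pow_smul z hy
    exact isArtinian_of_injective _ (H.bijective_mkQ x k i).1

/-- A nonzero top local cohomology module in positive degree is not finitely generated. -/
theorem H.subsingleton_of_finite (hI : genIdeal x k ≤ maximalIdeal R) (n : ℕ)
    (M : Type u) [AddCommGroup M] [Module R M]
    [Module.Finite R M] (hM : Adm (genIdeal x k) M)
    (hdim : Module.supportDim R M ≤ (n + 1 : ℕ))
    (hfin : Module.Finite R (H (genIdeal x k) (n + 1) M)) :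
    Subsingleton (H (genIdeal x k) (n + 1) M) := by
  have hM' := hM.of_surjective _ (Submodule.mkQ_surjective (Γ (genIdeal x k) M))
  obtain ⟨y, hy, hreg, -⟩ := exists_regular hI (Γ_quotient_eq_bot (M := M) (genIdeal x k)) ∅
    (by simp)
  have hbij := H.bijective_mkQ (M := M) x k n
  have hfin' : Module.Finite R (H (genIdeal x k) (n + 1) (M ⧸ Γ (genIdeal x k) M)) :=
    Module.Finite.of_surjective _ hbij.2
  have hlt : Module.supportDim R (M ⧸ Γ (genIdeal x k) M) < (n + 1 + 1 : ℕ) :=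
    ((Module.supportDim_le_of_surjective _ (Submodule.mkQ_surjective _)).trans hdim).trans_lt
      (by exact_mod_cast Nat.lt_succ_self (n + 1))
  have h0 := H.subsingleton_of_supportDim_lt x k hI (n + 1) _
    (hM'.of_surjective _ (Submodule.mkQ_surjective _)) (supportDim_quotSMulTop_lt hy hreg hlt)
  obtain ⟨π, δ, h1, -, -⟩ := H.exact_regular (genIdeal x k) (n + 1) hreg
  have hbot : (⊤ : Submodule R (H (genIdeal x k) (n + 1) (M ⧸ Γ (genIdeal x k) M))) = ⊥ := by
    refine Submodule.eq_bot_of_le_smul_of_le_jacobson_bot (maximalIdeal R) _ Module.Finite.fg_top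
      (fun z _ => ?_) (jacobson_eq_maximalIdeal ⊥ bot_ne_top).ge
    obtain ⟨w, rfl⟩ := (h1 z).1 (Subsingleton.elim _ _)
    exact Submodule.smul_mem_smul hy Submodule.mem_top
  have hs : Subsingleton (H (genIdeal x k) (n + 1) (M ⧸ Γ (genIdeal x k) M)) :=
    (Submodule.subsingleton_iff R).1 (subsingleton_of_bot_eq_top hbot.symm)
  exact hbij.1.subsingleton

/-- Grothendieck's nonvanishing theorem: if `H^{d+1}_I(M) = 0`, then for a suitable regular `y` the module
`H^d_I(M ⧸ yM)` is a finitely generated cokernel of `y` on `H^d_I(M)`, hence zero. -/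
theorem H.not_subsingleton (hI : genIdeal x k ≤ maximalIdeal R) (d : ℕ)
    (M : Type u) [AddCommGroup M] [Module R M]
    [Module.Finite R M] (hM : Adm (genIdeal x k) M) (hdim : Module.supportDim R M = d) :
    ¬ Subsingleton (H (genIdeal x k) d M) := by
  induction d generalizing M with
  | zero =>
    rw [H.subsingleton_zero_iff]
    intro hΓ
    obtain ⟨y, hy, hreg, -⟩ := exists_regular hI hΓ ∅ (by simp)
    have h := Module.supportDim_quotSMulTop_succ_eq_supportDim hreg hy
    rw [hdim] at h
    generalize Module.supportDim R (QuotSMulTop y M) = s at h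
    induction s using WithBot.recBotCoe with
    | bot => simp at h
    | coe s =>
      have h' : s + 1 = 0 := by exact_mod_cast h
      simp at h'
  | succ d ih =>
    intro hsub
    set M' := M ⧸ Γ (genIdeal x k) M
    have hM' : Adm (genIdeal x k) M' := hM.of_surjective _ (Submodule.mkQ_surjective _)
    have hΓ : Γ (genIdeal x k) M' = ⊥ := Γ_quotient_eq_bot _
    have hdim' : Module.supportDim R M' = (d + 1 : ℕ) := supportDim_quotient_Γ hM hdim
    have hsub' : Subsingleton (H (genIdeal x k) (d + 1) M') :=
      (H.bijective_mkQ (M := M) x k d).2.subsingleton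
    have hart := H.isArtinian x k hI d M' hM'
    obtain ⟨F, hF, hF'⟩ := exists_finite_primes (⊤ : Submodule R (H (genIdeal x k) d M'))
    obtain ⟨y, hy, hreg, hyF⟩ := exists_regular hI hΓ F hF
    obtain ⟨G, hG, -, hGy⟩ := hF' y hyF
    obtain ⟨π, δ, h1, h2, -⟩ := H.exact_regular (genIdeal x k) d hreg
    have hMy : Adm (genIdeal x k) (QuotSMulTop y M') :=
      hM'.of_surjective _ (Submodule.mkQ_surjective _)
    have hdimy := supportDim_quotSMulTop_eq hy hreg hdim'
    have hπ : Function.Surjective π := fun z => (h2 z).1 (Subsingleton.elim _ _)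
    refine ih _ hMy hdimy ?_
    cases d with
    | zero =>
      have := H.subsingleton_zero_iff.2 hΓ
      exact hπ.subsingleton
    | succ n =>
      refine H.subsingleton_of_finite x k hI n _ hMy hdimy.le ⟨?_⟩
      have : G.map π = ⊤ := by
        rw [eq_top_iff]
        intro z _
        obtain ⟨w, rfl⟩ := hπ z
        obtain ⟨g, hg, _, ⟨v, -, rfl⟩, rfl⟩ := Submodule.mem_sup.1 (hGy (Submodule.mem_top (x := w)))
        refine ⟨g, hg, ?_⟩
        rw [map_add, LinearMap.lsmul_apply, (h1 _).2 ⟨v, rfl⟩, add_zero]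
      rw [← this]
      exact hG.map π

end Nonvanishing

/-! ### Reduction to a parameter ideal -/

section Assembly

variable {R : Type u} [CommRing R]

theorem span_eq_genIdeal (x : ℕ → R) (r : ℕ) :
    Ideal.span (Set.range fun i : Fin r => x i) = genIdeal x r := by
  induction r with
  | zero => simp [genIdeal]
  | succ r ih =>
    rw [genIdeal, ← ih, ← Ideal.span_union]
    congr 1
    ext a
    simp only [Set.mem_range, Set.mem_union, Set.mem_singleton_iff]
    constructor
    · rintro ⟨i, rfl⟩
      rcases Nat.lt_succ_iff_lt_or_eq.1 i.2 with h | h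
      · exact Or.inl ⟨⟨i, h⟩, rfl⟩
      · exact Or.inr (by rw [h])
    · rintro (⟨i, rfl⟩ | rfl)
      · exact ⟨i.castSucc, rfl⟩
      · exact ⟨Fin.last r, rfl⟩

variable [IsNoetherianRing R] [IsLocalRing R]

/-- If `M ⧸ I M` has finite length then `I + Ann M` contains a power of the maximal ideal. -/
theorem adm_of_isFiniteLength (I : Ideal R) (M : Type u) [AddCommGroup M] [Module R M]
    [Module.Finite R M] (h : IsFiniteLength R (M ⧸ (I • (⊤ : Submodule R M)))) : Adm I M := by
  rw [isFiniteLength_iff_isNoetherian_isArtinian] at h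
  obtain ⟨-, hart⟩ := h
  set Q := M ⧸ (I • (⊤ : Submodule R M))
  have h1 : maximalIdeal R ≤ (Module.annihilator R Q).radical := by
    intro a ha
    obtain ⟨n, hn⟩ := IsArtinian.range_smul_pow_stabilizes Q a
    refine ⟨n, Module.mem_annihilator.2 fun u => ?_⟩
    have hbot : LinearMap.range (a ^ n • LinearMap.id : Q →ₗ[R] Q) = ⊥ := by
      refine Submodule.eq_bot_of_le_smul_of_le_jacobson_bot (maximalIdeal R) _
        (IsNoetherian.noetherian _) (fun z hz => ?_) (jacobson_eq_maximalIdeal ⊥ bot_ne_top).ge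
      rw [hn (n + 1) n.le_succ] at hz
      obtain ⟨w, rfl⟩ := hz
      have : (a ^ (n + 1) • LinearMap.id : Q →ₗ[R] Q) w =
          a • (a ^ n • LinearMap.id : Q →ₗ[R] Q) w := by
        simp [pow_succ', mul_smul]
      rw [this]
      exact Submodule.smul_mem_smul ha ⟨w, rfl⟩
    have : (a ^ n • LinearMap.id : Q →ₗ[R] Q) u ∈ (⊥ : Submodule R Q) := hbot ▸ ⟨u, rfl⟩
    simpa using this
  have h2 : (Module.annihilator R Q).radical = (I ⊔ Module.annihilator R M).radical := by
    rw [← PrimeSpectrum.zeroLocus_eq_iff, PrimeSpectrum.zeroLocus_sup,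
      ← Module.support_eq_zeroLocus, ← Module.support_eq_zeroLocus, Module.support_quotient,
      Set.inter_comm]
  exact Ideal.exists_pow_le_of_le_radical_of_fg (h1.trans h2.le) (IsNoetherian.noetherian _)

end Assembly

end LC

/-- If `x₁, …, x_r` is a part of a system of parameters of a finitely generated module `M`
of dimension `d` over a Noetherian local ring (i.e. the first `r` members of a full system
of parameters `x₁, …, x_d`), then `H^r_{(x₁, …, x_r)}(M) ≠ 0`. -/
theorem localCohomology_ne_zero_of_part_of_system_of_parameters
    {R : Type u} [CommRing R] [IsNoetherianRing R] [IsLocalRing R]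
    {M : Type u} [AddCommGroup M] [Module R M] [Module.Finite R M]
    {d : ℕ} (hd : moduleDim R M = d)
    (x : Fin d → R) (hx : IsSystemOfParameters M x)
    (r : ℕ) (hr : r ≤ d) :
    Nontrivial ((localCohomology
        (Ideal.span (Set.range fun i : Fin r => x (Fin.castLE hr i))) r).obj
      (ModuleCat.of R M)) := by
  let x' : ℕ → R := fun i => if h : i < d then x ⟨i, h⟩ else 0
  have hr' : Ideal.span (Set.range fun i : Fin r => x (Fin.castLE hr i)) = LC.genIdeal x' r := by
    rw [← LC.span_eq_genIdeal]
    congr 2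
    ext i
    change x _ = if h : (i : ℕ) < d then x ⟨i, h⟩ else 0
    rw [dif_pos (i.2.trans_le hr)]
    rfl
  have hd' : Ideal.span (Set.range x) = LC.genIdeal x' d := by
    rw [← LC.span_eq_genIdeal]
    congr 2
    ext i
    change x _ = if h : (i : ℕ) < d then x ⟨i, h⟩ else 0
    rw [dif_pos i.2]
  have hI : LC.genIdeal x' d ≤ maximalIdeal R := by
    rw [← hd', Ideal.span_le]
    rintro _ ⟨i, rfl⟩
    exact hx.1 i
  have hadm : LC.Adm (LC.genIdeal x' d) M := hd' ▸ LC.adm_of_isFiniteLength _ M hx.2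
  have hdim : Module.supportDim R M = d := by
    rw [Module.supportDim_eq_ringKrullDim_quotient_annihilator]
    exact hd
  by_contra hcon
  rw [not_nontrivial_iff_subsingleton, hr'] at hcon
  exact LC.H.not_subsingleton x' d hI d M hadm hdim
    (LC.H.subsingleton_of_le x' hr M (LC.H.subsingleton_of_localCohomology _ r M hcon))
end

section
/- Let (R, m) be a catenary equidimensional Noetherian local ring of dimension t and let x = x_1, ..., x_t be a sequence of t elements of R. Then x is a system of parameters of R if and only if the image of x is a system of parameters of R̂/U_{R̂}(0), where R̂ is the m-adic completion of R. -/
/-!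
The crucial point is that a prime `p` of `R` lies on a chain of primes of full length `t` ending
at `m`. Refine `p₀ ≤ p ≤ m`, with `p₀` a minimal prime, to a saturated chain; since
`dim R/p₀ = t` there is also a saturated chain of length `t` from `p₀` to `m`, and catenarity
makes both lengths equal (`exists_ltSeries_length_eq_mem`). The completion `R̂` is flat over `R`, so
by going-down this chain lifts to a chain of length `t` in `R̂` ending at the maximal ideal.
Its smallest member `P₀` satisfies `dim R̂/P₀ ≥ t > dim R̂/Ann V`, so `Ann V ⊄ P₀` and hence
`V ⊆ P₀`. Thus every prime `p` of `R` is the contraction of a prime `P ⊇ V` of `R̂`, and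
`P` is not the maximal ideal when `p ≠ m` (`exists_prime_completion_over`).

If `R̂/(xR̂ + V)` has dimension zero, then a prime `p ≠ m` containing `x` would give
a non-maximal prime `P ⊇ xR̂ + V`, a contradiction. Conversely, if `x` is a system of parameters,
every prime containing `xR̂` contains `mR̂`, which is the maximal ideal of `R̂`; and `V` is a
proper ideal by the above applied to `p = m`.
-/

open IsLocalRing

/-- A system of parameters of a Noetherian local ring `R` of dimension `t`: a sequence of `t`
elements of the maximal ideal generating an ideal primary to the maximal ideal. -/
def IsSOP (R : Type*) [CommRing R] [IsLocalRing R] {t : ℕ} (x : Fin t → R) : Prop :=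
  (∀ i, x i ∈ maximalIdeal R) ∧ (Ideal.span (Set.range x)).radical = maximalIdeal R

/-- A ring is catenary if, for any primes `p ≤ q`, all saturated chains of primes from `p`
to `q` have the same length. -/
def IsCatenaryRing (R : Type*) [CommRing R] : Prop :=
  ∀ p q : PrimeSpectrum R, p ≤ q →
    ∀ c₁ c₂ : LTSeries (PrimeSpectrum R),
      c₁.head = p → c₁.last = q → c₂.head = p → c₂.last = q →
      (∀ i : Fin c₁.length, c₁ i.castSucc ⋖ c₁ i.succ) →
      (∀ i : Fin c₂.length, c₂ i.castSucc ⋖ c₂ i.succ) →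
      c₁.length = c₂.length

/-- A ring is equidimensional if `dim R/p = dim R` for every minimal prime `p`. -/
def IsEquidimensionalRing (R : Type*) [CommRing R] : Prop :=
  ∀ p ∈ minimalPrimes R, ringKrullDim (R ⧸ p) = ringKrullDim R

lemma exists_ltSeries_of_le_of_le {α : Type*} [PartialOrder α] {a b c : α}
    (hab : a ≤ b) (hbc : b ≤ c) :
    ∃ s : LTSeries α, s.head = a ∧ s.last = c ∧ b ∈ s := by
  obtain ⟨s, hs1, hs2⟩ : ∃ s : LTSeries α, s.head = a ∧ s.last = b := by
    rcases hab.eq_or_lt with rfl | h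
    · exact ⟨RelSeries.singleton _ a, rfl, rfl⟩
    · exact ⟨(RelSeries.singleton _ a).snoc b h, RelSeries.head_snoc .., RelSeries.last_snoc ..⟩
  rcases hbc.eq_or_lt with rfl | h
  · exact ⟨s, hs1, hs2, hs2 ▸ s.last_mem⟩
  · refine ⟨s.snoc c (by rw [hs2]; exact h), by simp [hs1], by simp, ?_⟩
    rw [RelSeries.mem_snoc]
    exact .inl (hs2 ▸ s.last_mem)

lemma exists_covBy_ltSeries_refinement {α : Type*} [PartialOrder α] [WellFoundedLT α]
    [WellFoundedGT α] (s : LTSeries α) :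
    ∃ c : LTSeries α, c.head = s.head ∧ c.last = s.last ∧ s.length ≤ c.length ∧
      (∀ b ∈ s, b ∈ c) ∧ ∀ i : Fin c.length, c i.castSucc ⋖ c i.succ := by
  obtain ⟨c, i, hi, h0, h1⟩ := s.exists_relSeries_covBy
  refine ⟨⟨c.length, c, fun j => (c.step j).lt⟩, ?_, ?_, ?_, ?_, fun j => c.step j⟩
  · change c 0 = s 0
    rw [← hi, ← h0]; rfl
  · change c (Fin.last _) = s (Fin.last _)
    rw [← hi, ← h1]; rfl
  · have := Fintype.card_le_of_embedding i
    simp only [Fintype.card_fin] at this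
    change s.length ≤ c.length
    omega
  · rintro b ⟨j, rfl⟩
    exact ⟨i j, congr_fun hi j⟩

/-- In a catenary equidimensional Noetherian local ring of dimension `t`, every prime lies on a
chain of primes of length `t` ending at the maximal ideal. -/
lemma exists_ltSeries_length_eq_mem {R : Type*} [CommRing R] [IsNoetherianRing R] [IsLocalRing R]
    {t : ℕ} (hdim : ringKrullDim R = t) (hcat : IsCatenaryRing R) (hequi : IsEquidimensionalRing R)
    (p : PrimeSpectrum R) :
    ∃ c : LTSeries (PrimeSpectrum R), c.length = t ∧ c.last = closedPoint R ∧ p ∈ c := by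
  have hfin : FiniteDimensionalOrder (PrimeSpectrum R) :=
    inferInstanceAs (FiniteRingKrullDim R)
  have hLT : WellFoundedLT (PrimeSpectrum R) :=
    ⟨SetRel.IsWellFounded.of_finiteDimensional
      {(a, b) : PrimeSpectrum R × PrimeSpectrum R | a < b}⟩
  have hGT : WellFoundedGT (PrimeSpectrum R) :=
    ⟨SetRel.IsWellFounded.of_finiteDimensional
      (SetRel.inv {(a, b) : PrimeSpectrum R × PrimeSpectrum R | a < b})⟩
  have hlen (c : LTSeries (PrimeSpectrum R)) : c.length ≤ t := by
    have h : (c.length : WithBot ℕ∞) ≤ ringKrullDim R := Order.LTSeries.length_le_krullDim c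
    rw [hdim] at h
    exact_mod_cast h
  have hle (q : PrimeSpectrum R) : q ≤ closedPoint R := le_maximalIdeal q.2.ne_top
  obtain ⟨p₀, hp₀, hp₀p⟩ := Ideal.exists_minimalPrimes_le (I := ⊥) (J := p.asIdeal) bot_le
  let q₀ : PrimeSpectrum R := ⟨p₀, hp₀.1.1⟩
  -- A chain of length `t` starting at the minimal prime `p₀`, from `dim R/p₀ = t`.
  obtain ⟨d, hdh, hdl, hdt⟩ : ∃ d : LTSeries (PrimeSpectrum R),
      d.head = q₀ ∧ d.last = closedPoint R ∧ t ≤ d.length := by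
    have h1 : (t : WithBot ℕ∞) ≤
        Order.krullDim (PrimeSpectrum.zeroLocus (R := R) (p₀ : Set R)) := by
      rw [← ringKrullDim_quotient, hequi p₀ hp₀, hdim]
    obtain ⟨l, hl⟩ := Order.le_krullDim_iff.mp h1
    let e : LTSeries (PrimeSpectrum R) := l.map Subtype.val (Subtype.strictMono_coe _)
    have he : e.length = t := hl
    have heh : q₀ ≤ e.head := l.head.2
    -- `e` already has the maximal possible length, so it cannot be extended at either end.
    have heh' : q₀ = e.head := by
      by_contra hne
      have := hlen (e.cons q₀ (lt_of_le_of_ne heh hne))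
      simp [he] at this
    have hel : e.last = closedPoint R := by
      by_contra hne
      have := hlen (e.snoc (closedPoint R) (lt_of_le_of_ne (hle _) hne))
      simp [he] at this
    exact ⟨e, heh'.symm, hel, he.ge⟩
  obtain ⟨d', hd'h, hd'l, hd'len, -, hd'c⟩ := exists_covBy_ltSeries_refinement d
  obtain ⟨s, hsh, hsl, hsp⟩ := exists_ltSeries_of_le_of_le (a := q₀) (b := p) hp₀p (hle p)
  obtain ⟨c, hch, hcl, -, hcm, hcc⟩ := exists_covBy_ltSeries_refinement s
  refine ⟨c, ?_, hcl.trans hsl, hcm p hsp⟩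
  have heq := hcat q₀ (closedPoint R) (hle _) c d' (hch.trans hsh) (hcl.trans hsl)
    (hd'h.trans hdh) (hd'l.trans hdl) hcc hd'c
  exact le_antisymm (hlen c) (heq ▸ hdt.trans hd'len)

/-- An ideal `V` with `dim V < t` is contained in the smallest member of every chain of primes of
length `t`. -/
lemma le_head_of_moduleDim_lt {S : Type*} [CommRing S] {t : ℕ} (V : Ideal S)
    (hV : moduleDim S V < (t : WithBot ℕ∞)) (L : LTSeries (PrimeSpectrum S)) (hL : L.length = t) :
    V ≤ L.head.asIdeal := by
  have hne : ¬ Module.annihilator S V ≤ L.head.asIdeal := by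
    intro hle
    refine hV.not_ge ?_
    rw [moduleDim, ringKrullDim_quotient, Order.le_krullDim_iff]
    refine ⟨⟨L.length, fun i => ⟨L i, fun a ha => ?_⟩, fun i => L.step i⟩, hL⟩
    exact (show L.head.asIdeal ≤ (L i).asIdeal from L.head_le i) (hle ha)
  obtain ⟨a, ha, haP⟩ := SetLike.not_le_iff_exists.mp hne
  intro v hv
  have hav : a * v = 0 := by
    have := Module.mem_annihilator.mp ha ⟨v, hv⟩
    simpa using congrArg Subtype.val this
  exact (L.head.2.mem_or_mem (hav ▸ L.head.asIdeal.zero_mem : a * v ∈ _)).resolve_left haP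

/-- Every prime `p` of `R` is the contraction of a prime of the completion that contains `V`. -/
lemma exists_prime_completion_over {R : Type*} [CommRing R] [IsNoetherianRing R] [IsLocalRing R]
    {t : ℕ} (hdim : ringKrullDim R = t) (hcat : IsCatenaryRing R) (hequi : IsEquidimensionalRing R)
    (V : Ideal (AdicCompletion (maximalIdeal R) R))
    (hV : moduleDim (AdicCompletion (maximalIdeal R) R) V < (t : WithBot ℕ∞))
    (p : PrimeSpectrum R) :
    ∃ P : PrimeSpectrum (AdicCompletion (maximalIdeal R) R),
      P.comap (algebraMap R (AdicCompletion (maximalIdeal R) R)) = p ∧ V ≤ P.asIdeal := by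
  obtain ⟨c, hc, hcl, hpc⟩ := exists_ltSeries_length_eq_mem hdim hcat hequi p
  have hover : (maximalIdeal (AdicCompletion (maximalIdeal R) R)).LiesOver c.last.asIdeal := by
    constructor
    rw [hcl]
    exact (maximalIdeal_comap _).symm
  obtain ⟨L, hL, -, hmap⟩ := Ideal.exists_ltSeries_of_hasGoingDown c
    (maximalIdeal (AdicCompletion (maximalIdeal R) R))
  rw [← RelSeries.mem_toList, ← hmap, List.mem_map] at hpc
  obtain ⟨P, hP, hPp⟩ := hpc
  refine ⟨P, hPp, ?_⟩
  obtain ⟨i, rfl⟩ := RelSeries.mem_toList.mp hP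
  exact (le_head_of_moduleDim_lt V hV L (hL.trans hc)).trans (L.head_le i)

/-- Let `(R, m)` be a catenary equidimensional Noetherian local ring of dimension `t`, let
`R̂` be its `m`-adic completion and `V = U_{R̂}(0)` the unmixed component of `R̂` (the largest
ideal of `R̂` of dimension `< t`).  A sequence `x = x₁, …, x_t` of elements of `R` is a
system of parameters of `R` if and only if its image is a system of parameters of
`R̂/U_{R̂}(0)`, i.e. the image generates an ideal primary to the maximal ideal of
`R̂/U_{R̂}(0)`, which amounts to `dim R̂/((x)R̂ + V) = 0`. -/
theorem sop_iff_sop_completion_mod_unmixed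
    {R : Type*} [CommRing R] [IsNoetherianRing R] [IsLocalRing R]
    {t : ℕ} (hdim : ringKrullDim R = t)
    (hcat : IsCatenaryRing R) (hequi : IsEquidimensionalRing R)
    (V : Ideal (AdicCompletion (maximalIdeal R) R))
    (hVdim : moduleDim (AdicCompletion (maximalIdeal R) R) V < (t : WithBot ℕ∞))
    (hVmax : ∀ J : Ideal (AdicCompletion (maximalIdeal R) R),
      moduleDim (AdicCompletion (maximalIdeal R) R) J < (t : WithBot ℕ∞) → J ≤ V)
    (x : Fin t → R) :
    IsSOP R x ↔
      ringKrullDim ((AdicCompletion (maximalIdeal R) R) ⧸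
        (Ideal.span (Set.range fun i =>
          algebraMap R (AdicCompletion (maximalIdeal R) R) (x i)) ⊔ V)) = 0 := by
  have hcomap : (closedPoint (AdicCompletion (maximalIdeal R) R)).comap
      (algebraMap R (AdicCompletion (maximalIdeal R) R)) = closedPoint R :=
    PrimeSpectrum.ext (maximalIdeal_comap _)
  -- A prime of `R̂` contains `xR̂` iff its contraction to `R` contains `x`.
  have hspan (P : PrimeSpectrum (AdicCompletion (maximalIdeal R) R)) :
      Ideal.span (Set.range fun i => algebraMap R (AdicCompletion (maximalIdeal R) R) (x i)) ≤
          P.asIdeal ↔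
        Ideal.span (Set.range x) ≤
          (P.comap (algebraMap R (AdicCompletion (maximalIdeal R) R))).asIdeal := by
    simp only [Ideal.span_le, Set.range_subset_iff]
    rfl
  constructor
  · rintro ⟨hx, hrad⟩
    obtain ⟨P, hPm, hVP⟩ := exists_prime_completion_over hdim hcat hequi V hVdim (closedPoint R)
    refine le_antisymm ?_ ?_
    -- Every prime containing `xR̂ + V` contracts to `m`, so contains `mR̂`.
    · have hmax (Q : PrimeSpectrum (AdicCompletion (maximalIdeal R) R))
          (hQ : Ideal.span (Set.range fun i =>
            algebraMap R (AdicCompletion (maximalIdeal R) R) (x i)) ⊔ V ≤ Q.asIdeal) :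
          Q = closedPoint (AdicCompletion (maximalIdeal R) R) := by
        refine le_antisymm (le_maximalIdeal Q.2.ne_top) ?_
        change maximalIdeal (AdicCompletion (maximalIdeal R) R) ≤ Q.asIdeal
        rw [AdicCompletion.maximalIdeal_eq_map, Ideal.map_le_iff_le_comap]
        have h := (hspan Q).mp (le_sup_left.trans hQ)
        exact hrad.ge.trans ((Ideal.IsPrime.radical_le_iff (PrimeSpectrum.isPrime _)).mpr h)
      rw [ringKrullDim_quotient]
      have : Subsingleton (PrimeSpectrum.zeroLocus (R := AdicCompletion (maximalIdeal R) R)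
          ((Ideal.span (Set.range fun i =>
            algebraMap R (AdicCompletion (maximalIdeal R) R) (x i)) ⊔ V : Ideal _) : Set _)) :=
        ⟨fun a b => Subtype.ext ((hmax a.1 a.2).trans (hmax b.1 b.2).symm)⟩
      exact Order.krullDim_nonpos_of_subsingleton
    · rw [ringKrullDim_quotient]
      have hP : Ideal.span (Set.range fun i =>
          algebraMap R (AdicCompletion (maximalIdeal R) R) (x i)) ⊔ V ≤ P.asIdeal := by
        refine sup_le ((hspan P).mpr ?_) hVP
        rw [hPm, Ideal.span_le]
        rintro _ ⟨i, rfl⟩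
        exact hx i
      exact Order.krullDim_nonneg_iff.mpr ⟨⟨P, hP⟩⟩
  · intro h0
    rw [ringKrullDim_quotient] at h0
    have hx : Ideal.span (Set.range x) ≤ maximalIdeal R := by
      obtain ⟨Q, hQ⟩ := Order.krullDim_nonneg_iff.mp h0.ge
      have h := (hspan Q).mp (le_sup_left.trans hQ)
      exact h.trans (le_maximalIdeal (PrimeSpectrum.isPrime _).ne_top)
    refine ⟨fun i => hx (Ideal.subset_span ⟨i, rfl⟩), ?_⟩
    refine le_antisymm ((maximalIdeal.isMaximal R).isPrime.radical_le_iff.mpr hx) ?_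
    rw [Ideal.radical_eq_sInf]
    refine le_sInf ?_
    rintro p ⟨hxp, hp⟩
    obtain ⟨P, hPp, hVP⟩ := exists_prime_completion_over hdim hcat hequi V hVdim ⟨p, hp⟩
    have hPle : P ≤ closedPoint _ := le_maximalIdeal P.2.ne_top
    have hP : Ideal.span (Set.range fun i =>
        algebraMap R (AdicCompletion (maximalIdeal R) R) (x i)) ⊔ V ≤ P.asIdeal :=
      sup_le ((hspan P).mpr (by rw [hPp]; exact hxp)) hVP
    rcases hPle.eq_or_lt with rfl | hlt
    · exact (congrArg PrimeSpectrum.asIdeal (hcomap.symm.trans hPp)).le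
    -- `P` and the maximal ideal are two comparable primes containing `xR̂ + V`.
    · have h1 : (1 : WithBot ℕ∞) ≤ 0 := by
        rw [← h0]
        exact Order.one_le_krullDim_iff.mpr
          ⟨⟨P, hP⟩, ⟨closedPoint _, hP.trans hPle⟩, hlt⟩
      exact absurd h1 (by decide)
end
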